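/- arXiv:1512.09174 — 4 statements merged into one kernel-verified Lean document; each statement's English description precedes it below -/
import Mathlib

section
/- Given reals a, c, δ, γ > 0 satisfying (i) c < min(a, δ), (ii) γ ≥ 4a and γ > δ, (iii) δ + (c/δ)·γ ≤ a, suppose f satisfies (H) and (H''), and additionally -π/2 < f'(0) < 0. Then the equation x'(t) = f(x(t-1)) has at least two distinct SOP solutions p and q (q is not a time translate of p), each with minimal period equal to z'' - z for some three consecutive zeros z < z' < z'' of it. -/
/-!
Both solutions are of Kaplan–Yorke type: they satisfy `p (t + 2) = -p t` and have period `4`.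
With `g = -f` such a solution is a `4`-periodic solution of the planar Hamiltonian system
`x' = -g y`, `y' = g x` (where `y t = x (t - 1)`), whose energy is `G x + G y`, `G x = ∫₀ˣ g`.

The signed coordinate `r = sgn x * √(G x)` turns the energy levels into circles. Its inverse
`x = S r` is `C¹` also at `0`, because `g` is differentiable at `0` with positive derivative; with
`s = S'` it satisfies `g (S r) * s r = 2 * r`. On the circle of radius `ρ` the system becomes the
scalar equation `θ' = 2 / (s (ρ cos θ) * s (ρ sin θ))`, so a quarter turn takes the time
`Q ρ = ½ ∫₀^{π/2} s (ρ cos θ) * s (ρ sin θ) dθ` (`quarterTime`), and every `ρ > 0` with `Q ρ = 1`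
gives a periodic solution `p t = S (ρ cos θ(t))` with extrema at the even and zeros at the odd
integers (`NormalCoord.exists_sop`, `isSOP_of_quarter`). Here oddness of `f` makes the angular speed
`π/2`-periodic, so that a time shift by `1` is a rotation by a right angle.

The function `Q` is continuous on `ℝ`, and the equation `Q ρ = 1` has two positive solutions by the
intermediate value theorem:

* `Q 0 = π / (2 |f'(0)|) > 1` since `|f'(0)| < π/2`.
* `Q ρ < 1` for some `ρ` whose amplitude `S ρ` lies in `[a, 2a - c]`. The period is the derivative
  of the enclosed area with respect to the energy; in polar coordinates, if `Q ≥ 1` on the whole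
  energy range, then the area of the quarter annulus is at least the gain of energy
  `γ (a - c) ≥ 4a (a - c)`. But this quarter annulus lies in a square of side `2a - c` with a corner
  square of side more than `c` removed (`NormalCoord.area_le`), and
  `(2a - c)² - c² = 4a (a - c)`.
* `Q ρ > 1` for the amplitude `S ρ = γ`: the time spent where `x ≥ 2a`, where `g x = δ`, is already
  long enough (`NormalCoord.lt_quarterTime`).

The values of `f` outside `[-γ, γ]` are irrelevant, so `f` is first replaced by a function that is
constant on `[γ, ∞)`; this makes `G` unbounded and `S` globally defined.
-/

open Set Filter

/-- Hypotheses (H): `f` is continuous, satisfies the negative feedback condition,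
and is differentiable on a neighborhood of `0` with `f'(0) < 0`. -/
def HypH (f : ℝ → ℝ) : Prop :=
  Continuous f ∧ (∀ x : ℝ, x ≠ 0 → x * f x < 0) ∧
    (∀ᶠ y in nhds (0 : ℝ), DifferentiableAt ℝ f y) ∧ deriv f 0 < 0

/-- A solution on `[-1,∞)` of the delay equation `x'(t) = f (x (t-1))`. -/
def IsSolOn (f x : ℝ → ℝ) : Prop :=
  ContinuousOn x (Ici (-1)) ∧ ∀ t : ℝ, 0 < t → HasDerivAt x (f (x (t - 1))) t

/-- Membership in the set `K`: `φ(-1) = 0`, `φ` nondecreasing on `[-1,0]`,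
continuous there, and `|φ| ≤ M`. -/
def MemK (M : ℝ) (φ : ℝ → ℝ) : Prop :=
  ContinuousOn φ (Icc (-1) 0) ∧ φ (-1) = 0 ∧ MonotoneOn φ (Icc (-1) 0) ∧
    ∀ s ∈ Icc (-1 : ℝ) 0, |φ s| ≤ M

/-- `T` is the minimal (positive) period of `p`. -/
def MinPeriod {α : Type*} (p : ℝ → α) (T : ℝ) : Prop :=
  0 < T ∧ (∀ t, p (t + T) = p t) ∧
    ∀ T' : ℝ, 0 < T' → (∀ t, p (t + T') = p t) → T ≤ T'

/-- A slowly oscillating periodic (SOP) solution of `x'(t) = f (x (t-1))`: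
a nonconstant periodic differentiable solution any two of whose distinct
zeros are separated by more than `1`. -/
def IsSOP (f p : ℝ → ℝ) : Prop :=
  (∀ t : ℝ, HasDerivAt p (f (p (t - 1))) t) ∧
    (∃ T : ℝ, 0 < T ∧ ∀ t, p (t + T) = p t) ∧
    (∃ t s : ℝ, p t ≠ p s) ∧
    ∀ z z' : ℝ, p z = 0 → p z' = 0 → z ≠ z' → 1 < |z - z'|

/-- A Kaplan–Yorke solution: an SOP solution of minimal period `4`
satisfying `x(t) = -x(t-2)`. -/
def IsKY (f x : ℝ → ℝ) : Prop :=
  IsSOP f x ∧ MinPeriod x 4 ∧ ∀ t : ℝ, x t = -x (t - 2)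

/-- Hypotheses (H') with constants `μ, β, σ`. -/
def HypH' (f : ℝ → ℝ) (μ β σ : ℝ) : Prop :=
  (∀ x : ℝ, |f x| ≤ μ) ∧ ∀ x : ℝ, β ≤ |x| → σ ≤ |f x|

/-- Hypotheses (H'') with constants `a, c, δ, γ`. -/
def HypH'' (f : ℝ → ℝ) (a c δ γ : ℝ) : Prop :=
  (∀ x : ℝ, f (-x) = -f x) ∧ (∀ x ∈ Icc (0 : ℝ) (2 * a), |f x| ≤ γ) ∧
    (∀ x ∈ Icc a (2 * a - c), f x = -γ) ∧ ∀ x ∈ Icc (2 * a) γ, f x = -δ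

/-- The minimal period of `p` equals `z'' - z` for three consecutive zeros
`z < z' < z''` of `p`. -/
def PeriodThreeZeros (p : ℝ → ℝ) : Prop :=
  ∃ z z' z'' : ℝ, z < z' ∧ z' < z'' ∧ p z = 0 ∧ p z' = 0 ∧ p z'' = 0 ∧
    (∀ t, t ∈ Ioo z z' ∪ Ioo z' z'' → p t ≠ 0) ∧ MinPeriod p (z'' - z)

/-! ### The normal coordinate -/

/-- `S` is the change of variable that turns the energy `∫₀ˣ g` into a square: `S` is an odd
increasing `C¹` bijection of `ℝ` with inverse `R` and derivative `s`, and `∫₀^{S r} g = r ^ 2`.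
The constant `k` stands for the derivative of `g` at `0`. -/
structure NormalCoord (g : ℝ → ℝ) (k : ℝ) (S R s : ℝ → ℝ) : Prop where
  cont : Continuous s
  pos : ∀ r, 0 < s r
  hasDeriv : ∀ r, HasDerivAt S (s r) r
  odd : ∀ r, S (-r) = -S r
  left_inv : ∀ r, R (S r) = r
  right_inv : ∀ x, S (R x) = x
  energy : ∀ r, ∫ t in (0 : ℝ)..S r, g t = r ^ 2
  speed : ∀ r, g (S r) * s r = 2 * r
  zero_sq : s 0 ^ 2 = 2 / k

/-- The coordinate exists: its inverse `R x = ± √(∫₀ˣ g)` has derivative `|g x| / (2 √(∫₀ˣ g))`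
away from `0`, and this extends continuously to `0` by the value `√(k / 2) > 0`. The condition at
infinity makes `R` surjective. -/
theorem exists_normalCoord {g : ℝ → ℝ} {k δ γ : ℝ} (hg : Continuous g)
    (hodd : ∀ x, g (-x) = -g x) (hpos : ∀ x, 0 < x → 0 < g x) (hk : 0 < k)
    (hd : HasDerivAt g k 0) (hδ : 0 < δ) (htail : ∀ x, γ ≤ x → g x = δ) :
    ∃ S R s : ℝ → ℝ, NormalCoord g k S R s := by
  have hg0 : g 0 = 0 := by
    have := hodd 0
    simp only [neg_zero] at this
    linarith
  obtain ⟨G, hGdef⟩ : ∃ G : ℝ → ℝ, ∀ x, G x = ∫ t in (0 : ℝ)..x, g t := ⟨_, fun _ => rfl⟩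
  have hG : ∀ x, HasDerivAt G (g x) x := by
    intro x
    have := intervalIntegral.integral_hasDerivAt_right (hg.intervalIntegrable 0 x)
      (hg.stronglyMeasurableAtFilter _ _) hg.continuousAt
    rwa [show G = fun u => ∫ t in (0 : ℝ)..u, g t from funext hGdef]
  have hG0 : G 0 = 0 := by simp [hGdef]
  have hGcont : Continuous G := continuous_iff_continuousAt.2 fun x => (hG x).continuousAt
  have hGeven : ∀ x, G (-x) = G x := by
    intro x
    have h1 : ∫ t in (0 : ℝ)..x, g (-t) = ∫ t in (-x)..(-0), g t :=
      intervalIntegral.integral_comp_neg (fun t => g t)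
    simp only [hodd, intervalIntegral.integral_neg, neg_zero] at h1
    rw [hGdef, hGdef, intervalIntegral.integral_symm, ← h1, neg_neg]
  have hGpos' : ∀ x, 0 < x → 0 < G x := by
    intro x hx
    rw [hGdef]
    exact intervalIntegral.intervalIntegral_pos_of_pos_on (hg.intervalIntegrable _ _)
      (fun t ht => hpos t ht.1) hx
  have hGpos : ∀ x, x ≠ 0 → 0 < G x := by
    intro x hx
    rcases lt_or_gt_of_ne hx with h | h
    · rw [← hGeven]; exact hGpos' _ (by linarith)
    · exact hGpos' _ h
  obtain ⟨R, hRdef⟩ : ∃ R : ℝ → ℝ, ∀ x, R x = if 0 ≤ x then √(G x) else -√(G x) :=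
    ⟨_, fun _ => rfl⟩
  obtain ⟨m, hmdef⟩ : ∃ m : ℝ → ℝ, ∀ x, m x = if x = 0 then √(k / 2) else
      |g x| / (2 * √(G x)) := ⟨_, fun _ => rfl⟩
  have hR0 : R 0 = 0 := by simp [hRdef, hG0]
  have hRodd : ∀ x, R (-x) = -R x := by
    intro x
    rcases lt_trichotomy x 0 with h | h | h
    · rw [hRdef, hRdef, if_pos (by linarith), if_neg (by linarith), hGeven, neg_neg]
    · simp [h, hR0]
    · rw [hRdef, hRdef, if_neg (by linarith), if_pos h.le, hGeven]
  have hRsq : ∀ x, R x ^ 2 = G x := by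
    intro x
    have : 0 ≤ G x := by
      rcases eq_or_ne x 0 with h | h
      · simp [h, hG0]
      · exact (hGpos x h).le
    rw [hRdef]
    split_ifs <;> simp [Real.sq_sqrt this]
  have hgabs : ∀ x, x ≠ 0 → 0 < |g x| := by
    intro x hx
    rcases lt_or_gt_of_ne hx with h | h
    · have := hpos (-x) (by linarith)
      rw [hodd] at this
      exact abs_pos.2 (by linarith)
    · exact abs_pos.2 (hpos x h).ne'
  have hmpos : ∀ x, 0 < m x := by
    intro x
    rw [hmdef]
    split_ifs with h
    · exact Real.sqrt_pos.2 (by linarith)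
    · exact div_pos (hgabs x h) (by have := Real.sqrt_pos.2 (hGpos x h); linarith)
  -- `g x / x → k` and `G x / x ^ 2 → k / 2`, hence `m` is continuous at `0`.
  have hgx : Tendsto (fun x => g x / x) (nhdsWithin 0 {0}ᶜ) (nhds k) := by
    have := hasDerivAt_iff_tendsto_slope.1 hd
    refine this.congr fun x => ?_
    simp [slope_def_field, hg0]
  have hGx : Tendsto (fun x => G x / x ^ 2) (nhdsWithin 0 {0}ᶜ) (nhds (k / 2)) := by
    refine HasDerivAt.lhopital_zero_nhdsNE (f' := g) (g' := fun x => 2 * x) ?_ ?_ ?_ ?_ ?_ ?_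
    · exact Eventually.of_forall hG
    · refine Eventually.of_forall fun x => ?_
      simpa using hasDerivAt_pow 2 x
    · filter_upwards [self_mem_nhdsWithin] with x hx
      exact mul_ne_zero two_ne_zero hx
    · have := hGcont.tendsto 0
      rw [hG0] at this
      exact this.mono_left nhdsWithin_le_nhds
    · have : Tendsto (fun x : ℝ => x ^ 2) (nhds 0) (nhds (0 ^ 2)) := (continuous_pow 2).tendsto 0
      rw [zero_pow two_ne_zero] at this
      exact this.mono_left nhdsWithin_le_nhds
    · refine (hgx.div_const 2).congr fun x => ?_
      rw [div_div, mul_comm]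
  have hm0 : ContinuousAt m 0 := by
    rw [continuousAt_iff_punctured_nhds]
    have h1 : Tendsto (fun x => |g x / x| / (2 * √(G x / x ^ 2))) (nhdsWithin 0 {0}ᶜ)
        (nhds (|k| / (2 * √(k / 2)))) :=
      hgx.abs.div (hGx.sqrt.const_mul 2)
        (by have := Real.sqrt_pos.2 (show 0 < k / 2 by linarith); linarith)
    have h2 : |k| / (2 * √(k / 2)) = m 0 := by
      have h3 := Real.sqrt_pos.2 (show 0 < k / 2 by linarith)
      have h4 := Real.sq_sqrt (show 0 ≤ k / 2 by linarith)
      rw [hmdef, if_pos rfl, abs_of_pos hk, div_eq_iff (by linarith)]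
      nlinarith
    rw [h2] at h1
    refine h1.congr' ?_
    filter_upwards [self_mem_nhdsWithin] with x hx
    have hx' : 0 < |x| := abs_pos.2 hx
    have := Real.sqrt_pos.2 (hGpos x hx)
    rw [hmdef, if_neg (show x ≠ 0 from hx), Real.sqrt_div (hGpos x hx).le, Real.sqrt_sq_eq_abs, abs_div]
    field_simp
  have hmcont : Continuous m := by
    refine continuous_iff_continuousAt.2 fun x => ?_
    rcases eq_or_ne x 0 with rfl | hx
    · exact hm0
    · have : (fun x => |g x| / (2 * √(G x))) =ᶠ[nhds x] m := by
        filter_upwards [isOpen_ne.mem_nhds hx] with y hy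
        rw [hmdef, if_neg hy]
      refine ContinuousAt.congr ?_ this
      exact hg.continuousAt.abs.div (continuousAt_const.mul hGcont.continuousAt.sqrt)
        (by have := Real.sqrt_pos.2 (hGpos x hx); positivity)
  have hRabs : ∀ x, |R x| = √(G x) := by
    intro x
    rw [← hRsq, Real.sqrt_sq_eq_abs]
  have hRc0 : ContinuousAt R 0 := by
    have h1 : Tendsto (fun x => √(G x)) (nhds 0) (nhds 0) := by
      have := hGcont.sqrt.tendsto 0
      simpa [hG0] using this
    rw [ContinuousAt, hR0]
    exact tendsto_zero_iff_abs_tendsto_zero _ |>.2 (h1.congr fun x => (hRabs x).symm)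
  have hRne : ∀ x, x ≠ 0 → HasDerivAt R (m x) x := by
    intro x hx
    have h1 := (hG x).sqrt (hGpos x hx).ne'
    rw [hmdef, if_neg hx]
    rcases lt_or_gt_of_ne hx with h | h
    · have h2 : g x < 0 := by
        have := hpos (-x) (by linarith)
        rw [hodd] at this
        linarith
      have h3 := h1.neg
      rw [← neg_div, ← abs_of_neg h2] at h3
      refine h3.congr_of_eventuallyEq ?_
      filter_upwards [isOpen_Iio.mem_nhds h] with y hy
      rw [hRdef, if_neg (not_le.2 hy)]
      rfl
    · rw [abs_of_pos (hpos x h)]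
      refine h1.congr_of_eventuallyEq ?_
      filter_upwards [isOpen_Ioi.mem_nhds h] with y hy
      rw [hRdef, if_pos (le_of_lt hy)]
  have hR : ∀ x, HasDerivAt R (m x) x := by
    intro x
    rcases eq_or_ne x 0 with rfl | hx
    · exact hasDerivAt_of_hasDerivAt_of_ne hRne hRc0 hm0
    · exact hRne x hx
  have hRcont : Continuous R := continuous_iff_continuousAt.2 fun x => (hR x).continuousAt
  have hRmono : StrictMono R := strictMono_of_deriv_pos fun x => by
    rw [(hR x).deriv]; exact hmpos x
  have hGtail : ∀ x, γ ≤ x → G x = G γ + δ * (x - γ) := by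
    intro x hx
    rw [hGdef, hGdef, ← intervalIntegral.integral_add_adjacent_intervals
      (hg.intervalIntegrable 0 γ) (hg.intervalIntegrable γ x),
      intervalIntegral.integral_congr (a := γ) (g := fun _ => δ)]
    · simp [mul_comm]
    · intro t ht
      rw [uIcc_of_le hx] at ht
      exact htail t ht.1
  have hGtop : Tendsto G atTop atTop := by
    have : Tendsto (fun x => G γ + δ * (x - γ)) atTop atTop :=
      tendsto_atTop_add_const_left _ _
        ((tendsto_atTop_add_const_right _ (-γ) tendsto_id).const_mul_atTop hδ)
    refine this.congr' ?_
    filter_upwards [eventually_ge_atTop γ] with x hx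
    exact (hGtail x hx).symm
  have hRtop : Tendsto R atTop atTop := by
    refine (Real.tendsto_sqrt_atTop.comp hGtop).congr' ?_
    filter_upwards [eventually_ge_atTop 0] with x hx
    rw [hRdef, if_pos hx]
    rfl
  have hRbot : Tendsto R atBot atBot := by
    have := tendsto_neg_atTop_atBot.comp (hRtop.comp tendsto_neg_atBot_atTop)
    refine this.congr fun x => ?_
    simp [hRodd]
  have hRsurj : Function.Surjective R := hRcont.surjective hRtop hRbot
  let e := hRmono.orderIsoOfSurjective R hRsurj
  have hRe : ∀ r, R (e.symm r) = r := fun r => e.apply_symm_apply r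
  have heR : ∀ x, e.symm (R x) = x := fun x => e.symm_apply_apply x
  have hec : Continuous e.symm := e.symm.continuous
  refine ⟨e.symm, R, fun r => (m (e.symm r))⁻¹, ?_⟩
  have he0 : e.symm 0 = 0 := by rw [← hR0, heR, hR0]
  constructor
  · exact (hmcont.comp hec).inv₀ fun r => (hmpos _).ne'
  · exact fun r => inv_pos.2 (hmpos _)
  · exact fun r => (hR _).of_local_left_inverse hec.continuousAt (hmpos _).ne'
      (Eventually.of_forall hRe)
  · intro r
    apply hRmono.injective
    rw [hRe, hRodd, hRe]
  · exact hRe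
  · exact heR
  · intro r
    rw [← hGdef, ← hRsq, hRe]
  · intro r
    rw [← div_eq_mul_inv, div_eq_iff (hmpos _).ne']
    rcases eq_or_ne r 0 with rfl | hr
    · simp [he0, hg0]
    · have hx : e.symm r ≠ 0 := fun h => hr (by rw [← hRe r, h, hR0])
      have h1 := ((hR (e.symm r)).pow 2).unique
        ((hG (e.symm r)).congr_of_eventuallyEq (Eventually.of_forall fun x => by
          simpa using hRsq x))
      simp only [hRe] at h1
      rw [← h1]
      simp
  · rw [he0, hmdef, if_pos rfl, inv_pow, Real.sq_sqrt (by linarith), inv_div]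

/-! ### Quarter period and periodic solutions -/

/-- The time that the solution of `x' = -g y`, `y' = g x` needs for a quarter turn on the energy
level `ρ ^ 2`, written in the normal coordinates; `s` is the derivative of the coordinate. -/
noncomputable def quarterTime (s : ℝ → ℝ) (ρ : ℝ) : ℝ :=
  ∫ θ in (0 : ℝ)..Real.pi / 2, s (ρ * Real.cos θ) * s (ρ * Real.sin θ) / 2

namespace NormalCoord

variable {g S R s : ℝ → ℝ} {k : ℝ}

theorem strictMono (h : NormalCoord g k S R s) : StrictMono S :=
  strictMono_of_deriv_pos fun r => by rw [(h.hasDeriv r).deriv]; exact h.pos r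

theorem map_zero (h : NormalCoord g k S R s) : S 0 = 0 := by
  have := h.odd 0
  simp only [neg_zero] at this
  linarith

theorem even (h : NormalCoord g k S R s) (r : ℝ) : s (-r) = s r := by
  have h1 : HasDerivAt (fun r => S (-r)) (s (-r) * -1) r :=
    (h.hasDeriv (-r)).comp r (hasDerivAt_neg r)
  have h2 : HasDerivAt (fun r => S (-r)) (-s r) r :=
    (h.hasDeriv r).neg.congr_of_eventuallyEq (Eventually.of_forall fun x => h.odd x)
  have := h1.unique h2
  linarith

theorem integral_eq (h : NormalCoord g k S R s) (u v : ℝ) : ∫ r in u..v, s r = S v - S u :=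
  intervalIntegral.integral_eq_sub_of_hasDerivAt (fun r _ => h.hasDeriv r)
    (h.cont.intervalIntegrable _ _)

end NormalCoord

namespace NormalCoord
variable {g S R s : ℝ → ℝ} {k : ℝ}

/-- A level with quarter period `1` carries a solution of `p' (t) = -g (p (t - 1))`: with `Θ` the
angle as a function of time, `p t = S (ρ * cos (Θ t))` and `p (t - 1) = S (ρ * sin (Θ t))`. -/
theorem exists_sop (h : NormalCoord g k S R s) {ρ : ℝ} (hρ : 0 < ρ)
    (hQ : quarterTime s ρ = 1) :
    ∃ p : ℝ → ℝ, (∀ t, HasDerivAt p (-g (p (t - 1))) t) ∧ p 0 = S ρ ∧ (∀ t, |p t| ≤ S ρ) ∧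
      (∀ t, p (t + 4) = p t) ∧ (∀ t, p t = 0 ↔ ∃ n : ℤ, t = 2 * n + 1) ∧
      ∀ t, p t = S ρ → ∃ n : ℤ, t = 4 * n := by
  obtain ⟨W, hW⟩ : ∃ W : ℝ → ℝ, ∀ θ, W θ = s (ρ * Real.cos θ) * s (ρ * Real.sin θ) / 2 :=
    ⟨_, fun _ => rfl⟩
  have hWc : Continuous W := by
    rw [funext hW]
    have := h.cont
    fun_prop
  have hWpos : ∀ θ, 0 < W θ := fun θ => by
    rw [hW]; exact div_pos (mul_pos (h.pos _) (h.pos _)) two_pos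
  have hWper : ∀ θ, W (θ + Real.pi / 2) = W θ := by
    intro θ
    rw [hW, hW, Real.cos_add_pi_div_two, Real.sin_add_pi_div_two, mul_neg, h.even, mul_comm (s _)]
  -- `τ` is the time as a function of the angle; its inverse is the angle as a function of time.
  obtain ⟨τ, hτdef⟩ : ∃ τ : ℝ → ℝ, ∀ x, τ x = ∫ θ in (0 : ℝ)..x, W θ := ⟨_, fun _ => rfl⟩
  have hτ : ∀ x, HasDerivAt τ (W x) x := by
    intro x
    have := intervalIntegral.integral_hasDerivAt_right (hWc.intervalIntegrable 0 x)
      (hWc.stronglyMeasurableAtFilter _ _) hWc.continuousAt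
    rwa [show τ = fun u => ∫ t in (0 : ℝ)..u, W t from funext hτdef]
  have hτ0 : τ 0 = 0 := by simp [hτdef]
  have hτq : τ (Real.pi / 2) = 1 := by
    rw [hτdef, ← hQ, quarterTime]
    exact intervalIntegral.integral_congr fun θ _ => hW θ
  have hτadd : ∀ x, τ (x + Real.pi / 2) = τ x + 1 := by
    intro x
    have hper : Function.Periodic W (Real.pi / 2) := hWper
    have h1 := hper.intervalIntegral_add_eq x 0
    rw [zero_add, ← hτdef, hτq] at h1
    rw [hτdef, hτdef, ← h1, intervalIntegral.integral_add_adjacent_intervals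
      (hWc.intervalIntegrable _ _) (hWc.intervalIntegrable _ _)]
  have hτmono : StrictMono τ := strictMono_of_deriv_pos fun x => by
    rw [(hτ x).deriv]; exact hWpos x
  have hτnat : ∀ n : ℕ, τ (n * (Real.pi / 2)) = n := by
    intro n
    induction n with
    | zero => simp [hτ0]
    | succ n ih =>
      push_cast
      rw [add_mul, one_mul, hτadd, ih]
  have hτneg : ∀ n : ℕ, τ (-(n * (Real.pi / 2))) = -n := by
    intro n
    induction n with
    | zero => simp [hτ0]
    | succ n ih =>
      have := hτadd (-((n + 1 : ℕ) * (Real.pi / 2)))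
      rw [show -(((n + 1 : ℕ) : ℝ) * (Real.pi / 2)) + Real.pi / 2 = -(n * (Real.pi / 2)) by
        push_cast; ring, ih] at this
      push_cast at this ⊢
      linarith
  have hτint : ∀ n : ℤ, τ (n * (Real.pi / 2)) = n := by
    intro n
    obtain ⟨m, rfl | rfl⟩ := n.eq_nat_or_neg
    · exact_mod_cast hτnat m
    · have := hτneg m
      push_cast
      rwa [neg_mul]
  have hτcont : Continuous τ := continuous_iff_continuousAt.2 fun x => (hτ x).continuousAt
  have hτsurj : Function.Surjective τ := by
    intro y
    obtain ⟨n, hn⟩ := exists_nat_ge |y|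
    have h1 : -(n : ℝ) ≤ y := by linarith [neg_abs_le y]
    have h2 : y ≤ n := by linarith [le_abs_self y]
    exact mem_range_of_exists_le_of_exists_ge hτcont ⟨_, (hτneg n).le.trans h1⟩
      ⟨_, h2.trans (hτnat n).ge⟩
  let e := hτmono.orderIsoOfSurjective τ hτsurj
  obtain ⟨Θ, hΘ⟩ : ∃ Θ : ℝ → ℝ, Θ = e.symm := ⟨_, rfl⟩
  have hτΘ : ∀ r, τ (Θ r) = r := fun r => by rw [hΘ]; exact e.apply_symm_apply r
  have hΘτ : ∀ x, Θ (τ x) = x := fun x => by rw [hΘ]; exact e.symm_apply_apply x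
  have hΘc : Continuous Θ := by rw [hΘ]; exact e.symm.continuous
  have hΘd : ∀ t, HasDerivAt Θ (W (Θ t))⁻¹ t := fun t =>
    (hτ _).of_local_left_inverse hΘc.continuousAt (hWpos _).ne' (Eventually.of_forall hτΘ)
  have hΘadd : ∀ t, Θ (t + 1) = Θ t + Real.pi / 2 := by
    intro t
    rw [← hΘτ (Θ t + Real.pi / 2), hτadd, hτΘ]
  have hΘsub : ∀ t, Θ (t - 1) = Θ t - Real.pi / 2 := by
    intro t
    have := hΘadd (t - 1)
    rw [sub_add_cancel] at this
    linarith
  refine ⟨fun t => S (ρ * Real.cos (Θ t)), ?_, ?_, ?_, ?_, ?_, ?_⟩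
  · intro t
    simp only [hΘsub, Real.cos_sub_pi_div_two]
    have h1 := (h.hasDeriv (ρ * Real.cos (Θ t))).comp t (((hΘd t).cos).const_mul ρ)
    refine h1.congr_deriv ?_
    have h2 := h.speed (ρ * Real.sin (Θ t))
    have h3 := h.pos (ρ * Real.sin (Θ t))
    have h4 := h.pos (ρ * Real.cos (Θ t))
    rw [hW]
    field_simp
    linarith
  · have : Θ 0 = 0 := by rw [← hτ0, hΘτ, hτ0]
    simp [this]
  · intro t
    rw [abs_le, ← h.odd]
    constructor <;> apply h.strictMono.monotone <;>
      nlinarith [Real.neg_one_le_cos (Θ t), Real.cos_le_one (Θ t)]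
  · intro t
    have h4 : Θ (t + 4) = Θ t + 2 * Real.pi := by
      rw [show t + 4 = t + 1 + 1 + 1 + 1 by ring, hΘadd, hΘadd, hΘadd, hΘadd]
      ring
    simp only [h4, Real.cos_add_two_pi]
  · intro t
    have h1 : S (ρ * Real.cos (Θ t)) = 0 ↔ Real.cos (Θ t) = 0 := by
      rw [h.strictMono.injective.eq_iff' h.map_zero]
      simp [hρ.ne']
    simp only [h1]
    rw [Real.cos_eq_zero_iff]
    refine exists_congr fun n => ?_
    have h2 : ((2 * n + 1 : ℝ)) * Real.pi / 2 = ((2 * n + 1 : ℤ) : ℝ) * (Real.pi / 2) := by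
      push_cast; ring
    rw [h2]
    constructor
    · intro h3
      rw [← hτΘ t, h3, hτint]
      push_cast; ring
    · intro h3
      rw [← hΘτ (((2 * n + 1 : ℤ) : ℝ) * (Real.pi / 2)), hτint, h3]
      push_cast; ring_nf
  · intro t ht
    have h1 := h.strictMono.injective ht
    have h2 : Real.cos (Θ t) = 1 := by
      have : ρ * (Real.cos (Θ t) - 1) = 0 := by linarith
      rcases mul_eq_zero.1 this with h | h <;> linarith
    obtain ⟨n, hn⟩ := (Real.cos_eq_one_iff _).1 h2
    refine ⟨n, ?_⟩
    have h3 : Θ t = ((4 * n : ℤ) : ℝ) * (Real.pi / 2) := by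
      rw [← hn]; push_cast; ring
    rw [← hτΘ t, h3, hτint]
    push_cast; ring
end NormalCoord

/-- The zeros at the odd integers give the separation and the three consecutive zeros `-1, 1, 3`.
The minimal period is `4` because a period maps the point `0`, where the value `A` is attained, to
another such point, and these are multiples of `4`. -/
theorem isSOP_of_quarter {f p : ℝ → ℝ} {A : ℝ} (hA : 0 < A)
    (hd : ∀ t, HasDerivAt p (f (p (t - 1))) t) (h0 : p 0 = A) (h4 : ∀ t, p (t + 4) = p t)
    (hz : ∀ t, p t = 0 ↔ ∃ n : ℤ, t = 2 * n + 1) (hmax : ∀ t, p t = A → ∃ n : ℤ, t = 4 * n) :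
    IsSOP f p ∧ PeriodThreeZeros p := by
  refine ⟨⟨hd, ⟨4, by norm_num, h4⟩, ⟨0, 1, ?_⟩, ?_⟩, -1, 1, 3, by norm_num, by norm_num,
    (hz _).2 ⟨-1, by norm_num⟩, (hz _).2 ⟨0, by norm_num⟩, (hz _).2 ⟨1, by norm_num⟩, ?_, ?_⟩
  · rw [h0, (hz 1).2 ⟨0, by norm_num⟩]
    exact hA.ne'
  · intro z z' h1 h2 hne
    obtain ⟨n, rfl⟩ := (hz z).1 h1
    obtain ⟨m, rfl⟩ := (hz z').1 h2
    have h3 : n - m ≠ 0 := fun h => hne (by rw [sub_eq_zero.1 h])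
    have h5 : (1 : ℝ) ≤ |((n - m : ℤ) : ℝ)| := by exact_mod_cast Int.one_le_abs h3
    rw [show (2 * n + 1 - (2 * m + 1) : ℝ) = 2 * ((n - m : ℤ) : ℝ) by push_cast; ring, abs_mul,
      abs_two]
    linarith
  · intro t ht h1
    obtain ⟨n, rfl⟩ := (hz t).1 h1
    rcases ht with ⟨ha, hb⟩ | ⟨ha, hb⟩
    · have h2 : (-1 : ℤ) < n := by exact_mod_cast (by linarith : (-1 : ℝ) < n)
      have h3 : n < (0 : ℤ) := by exact_mod_cast (by linarith : (n : ℝ) < 0)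
      omega
    · have h2 : (0 : ℤ) < n := by exact_mod_cast (by linarith : (0 : ℝ) < n)
      have h3 : n < (1 : ℤ) := by exact_mod_cast (by linarith : (n : ℝ) < 1)
      omega
  · norm_num [MinPeriod]
    refine ⟨h4, fun T hT hper => ?_⟩
    obtain ⟨n, rfl⟩ := hmax T (by rw [← h0, ← hper 0, zero_add])
    have h2 : (0 : ℤ) < n := by exact_mod_cast (by linarith : (0 : ℝ) < n)
    have h3 : (1 : ℝ) ≤ n := by exact_mod_cast h2
    linarith

/-! ### Estimates of the quarter period -/

theorem continuous_quarterTime {s : ℝ → ℝ} (hs : Continuous s) : Continuous (quarterTime s) := by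
  unfold quarterTime
  apply intervalIntegral.continuous_parametric_intervalIntegral_of_continuous'
  unfold Function.uncurry
  fun_prop

namespace NormalCoord
variable {g S R s : ℝ → ℝ} {k : ℝ}

theorem quarterTime_zero (h : NormalCoord g k S R s) : quarterTime s 0 = Real.pi / (2 * k) := by
  have : s 0 * s 0 = 2 / k := by rw [← h.zero_sq, sq]
  simp only [quarterTime, zero_mul, this, intervalIntegral.integral_const, smul_eq_mul, sub_zero]
  ring

/-- The two halves of the quarter turn take the same time, by the symmetry `θ ↦ π / 2 - θ`. -/
theorem quarterTime_eq (h : NormalCoord g k S R s) (ρ : ℝ) :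
    quarterTime s ρ =
      ∫ θ in (0 : ℝ)..Real.pi / 4, s (ρ * Real.cos θ) * s (ρ * Real.sin θ) := by
  have hc : Continuous fun θ => s (ρ * Real.cos θ) * s (ρ * Real.sin θ) := by
    have := h.cont
    fun_prop
  have h1 : ∫ θ in (0 : ℝ)..Real.pi / 4, s (ρ * Real.cos θ) * s (ρ * Real.sin θ) =
      ∫ θ in Real.pi / 4..Real.pi / 2, s (ρ * Real.cos θ) * s (ρ * Real.sin θ) := by
    have h2 := intervalIntegral.integral_comp_sub_left (a := Real.pi / 4) (b := Real.pi / 2)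
      (fun θ => s (ρ * Real.cos θ) * s (ρ * Real.sin θ)) (Real.pi / 2)
    rw [sub_self, show Real.pi / 2 - Real.pi / 4 = Real.pi / 4 by ring] at h2
    rw [← h2]
    simp only [Real.cos_pi_div_two_sub, Real.sin_pi_div_two_sub, mul_comm]
  rw [quarterTime, intervalIntegral.integral_div,
    ← intervalIntegral.integral_add_adjacent_intervals (hc.intervalIntegrable 0 (Real.pi / 4))
      (hc.intervalIntegrable _ _), ← h1]
  ring

/-- Lower bound for the quarter period from a part of the level on which `g` is constant. Where the
first coordinate `r = ρ * cos θ` lies in `[b, ρ]`, the second variable moves at the constant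
speed `δ` from `0` to `S √(ρ ^ 2 - b ^ 2)`. This is counted twice by symmetry; `ρ ^ 2 < 2 * b ^ 2`
says that this part ends before the diagonal `θ = π / 4`. -/
theorem lt_quarterTime (h : NormalCoord g k S R s) {ρ b δ : ℝ} (hδ : 0 < δ) (hb : 0 < b)
    (hbρ : b < ρ) (hhalf : ρ ^ 2 < 2 * b ^ 2) (hg : ∀ r ∈ Icc b ρ, g (S r) = δ) :
    2 * S √(ρ ^ 2 - b ^ 2) / δ < quarterTime s ρ := by
  have hρ : 0 < ρ := hb.trans hbρ
  have hc : Continuous fun θ => s (ρ * Real.cos θ) * s (ρ * Real.sin θ) := by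
    have := h.cont
    fun_prop
  -- `θ₁` is the angle at which the first coordinate has decreased from `ρ` to `b`.
  obtain ⟨θ₁, hθ₁⟩ : ∃ θ₁, θ₁ = Real.arccos (b / ρ) := ⟨_, rfl⟩
  have hbρ1 : b / ρ ≤ 1 := (div_le_one hρ).2 hbρ.le
  have hbρ0 : 0 < b / ρ := div_pos hb hρ
  have hcos : ρ * Real.cos θ₁ = b := by
    rw [hθ₁, Real.cos_arccos (by linarith) hbρ1]
    field_simp
  have hθ0 : 0 ≤ θ₁ := by rw [hθ₁]; exact Real.arccos_nonneg _
  have hθ4 : θ₁ < Real.pi / 4 := by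
    by_contra hcon
    push Not at hcon
    have h1 : Real.cos θ₁ ≤ Real.cos (Real.pi / 4) :=
      Real.cos_le_cos_of_nonneg_of_le_pi (by positivity) (by rw [hθ₁]; exact Real.arccos_le_pi _)
        hcon
    rw [Real.cos_pi_div_four] at h1
    have h2 : b ≤ ρ * (√2 / 2) := by
      rw [← hcos]; exact mul_le_mul_of_nonneg_left h1 hρ.le
    have h3 : b ^ 2 ≤ (ρ * (√2 / 2)) ^ 2 := pow_le_pow_left₀ hb.le h2 2
    rw [mul_pow, div_pow, Real.sq_sqrt zero_le_two] at h3
    linarith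
  have hsin : ρ * Real.sin θ₁ = √(ρ ^ 2 - b ^ 2) := by
    have h1 : 0 ≤ Real.sin θ₁ :=
      Real.sin_nonneg_of_nonneg_of_le_pi hθ0 (by linarith [Real.pi_pos])
    rw [← Real.sqrt_sq (mul_nonneg hρ.le h1)]
    congr 1
    have := Real.sin_sq_add_cos_sq θ₁
    rw [← hcos]
    linear_combination ρ ^ 2 * this
  have hmain : ∫ θ in (0 : ℝ)..θ₁, s (ρ * Real.cos θ) * s (ρ * Real.sin θ) =
      2 * S √(ρ ^ 2 - b ^ 2) / δ := by
    have hderiv : ∀ θ ∈ uIcc 0 θ₁, HasDerivAt (fun θ => 2 * S (ρ * Real.sin θ) / δ)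
        (s (ρ * Real.cos θ) * s (ρ * Real.sin θ)) θ := by
      intro θ hθ
      rw [uIcc_of_le hθ0] at hθ
      have h1 := (((h.hasDeriv (ρ * Real.sin θ)).comp θ
        ((Real.hasDerivAt_sin θ).const_mul ρ)).const_mul 2).div_const δ
      refine h1.congr_deriv ?_
      have h2 := h.speed (ρ * Real.cos θ)
      rw [hg _ ⟨?_, ?_⟩] at h2
      · field_simp
        linear_combination -s (ρ * Real.sin θ) * h2
      · rw [← hcos]
        exact mul_le_mul_of_nonneg_left (Real.cos_le_cos_of_nonneg_of_le_pi hθ.1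
          (by linarith [Real.pi_pos]) hθ.2) hρ.le
      · nlinarith [Real.cos_le_one θ]
    rw [intervalIntegral.integral_eq_sub_of_hasDerivAt hderiv (hc.intervalIntegrable _ _), hsin]
    simp [h.map_zero]
  rw [h.quarterTime_eq, ← intervalIntegral.integral_add_adjacent_intervals
    (hc.intervalIntegrable 0 θ₁) (hc.intervalIntegrable _ _), hmain]
  have : 0 < ∫ θ in θ₁..Real.pi / 4, s (ρ * Real.cos θ) * s (ρ * Real.sin θ) :=
    intervalIntegral.intervalIntegral_pos_of_pos (hc.intervalIntegrable _ _)
      (fun θ => mul_pos (h.pos _) (h.pos _)) hθ4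
  linarith

/-- If the quarter period is at least `1` between the levels `ρ₁ ^ 2` and `ρ₂ ^ 2`, then the energy
difference is at most the area (in the variables `x = S u`, `y = S v`) of the quarter annulus
between them. This annulus is contained in the square `[0, S ρ₂]²` without the corner
`(S (ρ₂ / √2), S ρ₂]²`. -/
theorem area_le (h : NormalCoord g k S R s) {ρ₁ ρ₂ : ℝ} (h1 : 0 < ρ₁) (h12 : ρ₁ ≤ ρ₂)
    (hQ : ∀ r ∈ Icc ρ₁ ρ₂, 1 ≤ quarterTime s r) :
    ρ₂ ^ 2 - ρ₁ ^ 2 ≤ S ρ₂ ^ 2 - (S ρ₂ - S (ρ₂ / √2)) ^ 2 := by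
  have hρ₂ : 0 < ρ₂ := h1.trans_le h12
  have hs2 : 0 < √(2 : ℝ) := Real.sqrt_pos.2 two_pos
  have hsq2 : √(2 : ℝ) ^ 2 = 2 := Real.sq_sqrt zero_le_two
  have hρs : ρ₂ / √2 ≤ ρ₂ := div_le_self hρ₂.le (Real.one_le_sqrt.2 one_le_two)
  obtain ⟨F, hF⟩ : ∃ F : ℝ × ℝ → ℝ, ∀ p, F p = s p.1 * s p.2 := ⟨_, fun _ => rfl⟩
  have hFc : Continuous F := by
    rw [funext hF]
    have := h.cont
    fun_prop
  have hFpos : ∀ p, 0 ≤ F p := fun p => by rw [hF]; exact (mul_pos (h.pos _) (h.pos _)).le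
  have hbox : ∀ u v : ℝ, u ≤ v →
      ∫ p in Ioc u v ×ˢ Ioc u v, F p = (S v - S u) ^ 2 := by
    intro u v huv
    rw [funext hF, MeasureTheory.Measure.volume_eq_prod, MeasureTheory.setIntegral_prod_mul,
      ← intervalIntegral.integral_of_le huv, h.integral_eq, sq]
  have hbox' : ∫ p in Icc 0 ρ₂ ×ˢ Icc 0 ρ₂, F p = S ρ₂ ^ 2 := by
    rw [funext hF, MeasureTheory.Measure.volume_eq_prod, MeasureTheory.setIntegral_prod_mul,
      MeasureTheory.integral_Icc_eq_integral_Ioc,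
      ← intervalIntegral.integral_of_le hρ₂.le, h.integral_eq, sq, h.map_zero, sub_zero]
  obtain ⟨rect, hrect⟩ : ∃ r : Set (ℝ × ℝ), r = Icc ρ₁ ρ₂ ×ˢ Icc 0 (Real.pi / 2) := ⟨_, rfl⟩
  have hrectc : IsCompact rect := by rw [hrect]; exact isCompact_Icc.prod isCompact_Icc
  have hrectt : rect ⊆ polarCoord.target := by
    rw [hrect, polarCoord_target]
    refine prod_mono (fun r hr => h1.trans_le hr.1) fun θ hθ => ⟨?_, ?_⟩ <;>
      linarith [hθ.1, hθ.2, Real.pi_pos]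
  have hint : MeasureTheory.IntegrableOn F (Icc 0 ρ₂ ×ˢ Icc 0 ρ₂) :=
    hFc.continuousOn.integrableOn_compact (isCompact_Icc.prod isCompact_Icc)
  have hsub : Ioc (ρ₂ / √2) ρ₂ ×ˢ Ioc (ρ₂ / √2) ρ₂ ⊆ Icc 0 ρ₂ ×ˢ Icc 0 ρ₂ := by
    have : Ioc (ρ₂ / √2) ρ₂ ⊆ Icc 0 ρ₂ := fun r hr =>
      ⟨(div_nonneg hρ₂.le hs2.le).trans hr.1.le, hr.2⟩
    exact prod_mono this this
  have himg : polarCoord.symm '' rect ⊆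
      (Icc 0 ρ₂ ×ˢ Icc 0 ρ₂) \ (Ioc (ρ₂ / √2) ρ₂ ×ˢ Ioc (ρ₂ / √2) ρ₂) := by
    rintro _ ⟨⟨r, θ⟩, hp, rfl⟩
    rw [hrect] at hp
    obtain ⟨⟨hr1, hr2⟩, hθ1, hθ2⟩ := hp
    simp only at hr1 hr2 hθ1 hθ2
    have hr0 : 0 < r := h1.trans_le hr1
    have hcos : 0 ≤ Real.cos θ := Real.cos_nonneg_of_mem_Icc ⟨by linarith, hθ2⟩
    have hsin : 0 ≤ Real.sin θ :=
      Real.sin_nonneg_of_nonneg_of_le_pi hθ1 (by linarith [Real.pi_pos])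
    simp only [polarCoord_symm_apply, Set.mem_sdiff, mem_prod, mem_Icc, mem_Ioc, not_and]
    refine ⟨⟨⟨by positivity, ?_⟩, by positivity, ?_⟩, ?_⟩
    · nlinarith [Real.cos_le_one θ]
    · nlinarith [Real.sin_le_one θ]
    · rintro ⟨ha, -⟩ hb
      exfalso
      have hd : 0 ≤ ρ₂ / √2 := by positivity
      have h3 := pow_lt_pow_left₀ ha hd two_ne_zero
      have h4 := pow_lt_pow_left₀ hb hd two_ne_zero
      rw [div_pow, hsq2] at h3 h4
      have h5 := Real.sin_sq_add_cos_sq θ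
      have h6 : (r * Real.cos θ) ^ 2 + (r * Real.sin θ) ^ 2 = r ^ 2 := by
        linear_combination r ^ 2 * h5
      nlinarith
  -- The energy is compared with the area by passing to polar coordinates on the annulus.
  have hchange : ∫ p in polarCoord.symm '' rect, F p =
      ∫ p in rect, |p.1| * F (polarCoord.symm p) := by
    rw [MeasureTheory.integral_image_eq_integral_abs_det_fderiv_smul MeasureTheory.volume
      hrectc.measurableSet
      (fun p _ => (hasFDerivAt_polarCoord_symm p).hasFDerivWithinAt)
      (polarCoord.symm.injOn.mono hrectt)]
    simp only [det_fderivPolarCoordSymm, smul_eq_mul]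
  have hlow : ∫ p in rect, |p.1| * F (polarCoord.symm p) =
      ∫ r in ρ₁..ρ₂, 2 * r * quarterTime s r := by
    have hcc : Continuous fun p : ℝ × ℝ => |p.1| * F (polarCoord.symm p) :=
      continuous_fst.abs.mul (hFc.comp continuous_polarCoord_symm)
    have hi := hcc.continuousOn.integrableOn_compact (μ := MeasureTheory.volume) hrectc
    rw [hrect] at hi ⊢
    rw [MeasureTheory.Measure.volume_eq_prod] at hi ⊢
    rw [MeasureTheory.setIntegral_prod _ hi, MeasureTheory.integral_Icc_eq_integral_Ioc,
      ← intervalIntegral.integral_of_le h12]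
    refine intervalIntegral.integral_congr fun r hr => ?_
    rw [uIcc_of_le h12] at hr
    simp only [polarCoord_symm_apply, hF]
    rw [MeasureTheory.integral_Icc_eq_integral_Ioc,
      ← intervalIntegral.integral_of_le (by positivity), intervalIntegral.integral_const_mul,
      abs_of_pos (h1.trans_le hr.1), quarterTime, intervalIntegral.integral_div]
    ring
  have hge : ρ₂ ^ 2 - ρ₁ ^ 2 ≤ ∫ r in ρ₁..ρ₂, 2 * r * quarterTime s r := by
    have h3 : ∫ r in ρ₁..ρ₂, 2 * r = ρ₂ ^ 2 - ρ₁ ^ 2 := by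
      rw [intervalIntegral.integral_const_mul, integral_id]
      ring
    rw [← h3]
    have hq := continuous_quarterTime h.cont
    refine intervalIntegral.integral_mono_on h12 (Continuous.intervalIntegrable (by fun_prop) _ _)
      (Continuous.intervalIntegrable (by fun_prop) _ _) fun r hr => ?_
    have := hQ r hr
    have := h1.trans_le hr.1
    nlinarith
  have hupp : ∫ p in polarCoord.symm '' rect, F p ≤ S ρ₂ ^ 2 - (S ρ₂ - S (ρ₂ / √2)) ^ 2 := by
    rw [← hbox', ← hbox _ _ hρs, ← MeasureTheory.setIntegral_sdiff
      (measurableSet_Ioc.prod measurableSet_Ioc) hint hsub]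
    exact MeasureTheory.setIntegral_mono_set (hint.mono_set sdiff_subset)
      (Eventually.of_forall hFpos) himg.eventuallyLE
  rw [hchange, hlow] at hupp
  exact hge.trans hupp
end NormalCoord

/-! ### Two solutions -/

theorem statement_13 (f : ℝ → ℝ) (a c δ γ : ℝ)
    (ha : 0 < a) (hc : 0 < c) (hδ : 0 < δ) (hγ : 0 < γ)
    (hi : c < min a δ) (hii : 4 * a ≤ γ ∧ δ < γ) (hiii : δ + (c / δ) * γ ≤ a)
    (hH : HypH f) (hH'' : HypH'' f a c δ γ)
    (hderiv : -(Real.pi / 2) < deriv f 0) :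
    ∃ p q : ℝ → ℝ, IsSOP f p ∧ IsSOP f q ∧
      (∀ s : ℝ, ∃ t : ℝ, q t ≠ p (t + s)) ∧
      PeriodThreeZeros p ∧ PeriodThreeZeros q := by
  obtain ⟨hfc, hneg, hdiff, hd0⟩ := hH
  obtain ⟨hodd, hbd, hplat, htail⟩ := hH''
  obtain ⟨h4a, hδγ⟩ := hii
  -- Clearing denominators in `hiii` and using AM-GM: `c * γ ≤ δ * (a - δ) ≤ a ^ 2 / 4`.
  have hcγ : δ ^ 2 + c * γ ≤ a * δ := by
    have h1 : (δ + c / δ * γ) * δ = δ ^ 2 + c * γ := by field_simp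
    rw [← h1]
    exact mul_le_mul_of_nonneg_right hiii hδ.le
  have hca : 16 * c ≤ a := by
    have h1 : c * (4 * a) ≤ c * γ := mul_le_mul_of_nonneg_left h4a hc.le
    have h2 : a * (16 * c) ≤ a * a := by nlinarith [sq_nonneg (a - 2 * δ)]
    exact le_of_mul_le_mul_left h2 ha
  have hδac : δ < a - c := by
    have h1 : c * δ < c * γ := mul_lt_mul_of_pos_left hδγ hc
    have h2 : δ * δ < δ * (a - c) := by nlinarith
    exact lt_of_mul_lt_mul_left h2 hδ.le
  -- `g` is `-f`, frozen outside `[-γ, γ]`.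
  obtain ⟨g, hgdef⟩ : ∃ g : ℝ → ℝ, ∀ x, g x = -f (max (-γ) (min x γ)) := ⟨_, fun _ => rfl⟩
  have hgf : ∀ x, |x| ≤ γ → g x = -f x := by
    intro x hx
    rw [abs_le] at hx
    rw [hgdef, min_eq_left hx.2, max_eq_right hx.1]
  have hgf' : ∀ x, 0 ≤ x → x ≤ γ → g x = -f x := fun x h1 h2 =>
    hgf x (by rwa [abs_of_nonneg h1])
  have hgc : Continuous g := by
    rw [funext hgdef]
    fun_prop
  have hgodd : ∀ x, g (-x) = -g x := by
    intro x
    have h1 : max (-γ) (min (-x) γ) = -max (-γ) (min x γ) := by grind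
    rw [hgdef, hgdef, h1, hodd]
  have hgpos : ∀ x, 0 < x → 0 < g x := by
    intro x hx
    have h1 : 0 < max (-γ) (min x γ) := lt_max_of_lt_right (lt_min hx hγ)
    have h2 := hneg _ h1.ne'
    rw [hgdef]
    by_contra h3
    push Not at h3
    nlinarith
  have hgtail : ∀ x, 2 * a ≤ x → g x = δ := by
    intro x hx
    have h1 : max (-γ) (min x γ) = min x γ :=
      max_eq_right (le_min (by linarith) (by linarith))
    rw [hgdef, h1, htail _ ⟨le_min hx (by linarith), min_le_right _ _⟩, neg_neg]
  have hgplat : ∀ x ∈ Icc a (2 * a - c), g x = γ := by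
    intro x hx
    rw [hgf' x (by linarith [hx.1]) (by linarith [hx.2]), hplat x hx, neg_neg]
  have hgle : ∀ x ∈ Icc 0 (2 * a), g x ≤ γ := by
    intro x hx
    rw [hgf' x hx.1 (by linarith [hx.2])]
    exact (neg_le_abs _).trans (hbd x hx)
  have hgd : HasDerivAt g (-deriv f 0) 0 := by
    have h1 := hdiff.self_of_nhds.hasDerivAt.neg
    refine h1.congr_of_eventuallyEq ?_
    filter_upwards [Ioo_mem_nhds (neg_lt_zero.2 hγ) hγ] with x hx
    exact hgf x (abs_le.2 ⟨hx.1.le, hx.2.le⟩)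
  have hk : 0 < -deriv f 0 := by linarith
  obtain ⟨S, R, s, h⟩ := exists_normalCoord hgc hgodd hgpos hk hgd hδ hgtail
  have hRmono : StrictMono R := fun u v huv => by
    rwa [← h.strictMono.lt_iff_lt, h.right_inv, h.right_inv]
  have hR0 : R 0 = 0 := by
    have := h.left_inv 0
    rwa [h.map_zero] at this
  have henergy : ∀ u v, ∫ t in S u..S v, g t = v ^ 2 - u ^ 2 := by
    intro u v
    rw [← h.energy, ← h.energy, intervalIntegral.integral_interval_sub_left
      (hgc.intervalIntegrable _ _) (hgc.intervalIntegrable _ _)]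
  have henergy_le : ∀ u v, 0 ≤ S u → u ≤ v → S v ≤ 2 * a →
      v ^ 2 - u ^ 2 ≤ γ * (S v - S u) := by
    intro u v hu huv hv
    have hS := h.strictMono.monotone huv
    have h1 : ∫ t in S u..S v, g t ≤ ∫ t in S u..S v, γ :=
      intervalIntegral.integral_mono_on hS (hgc.intervalIntegrable _ _)
        (continuous_const.intervalIntegrable _ _) fun t ht =>
        hgle t ⟨hu.trans ht.1, ht.2.trans hv⟩
    rw [henergy, intervalIntegral.integral_const, smul_eq_mul, mul_comm] at h1
    exact h1
  have hconst : ∀ u v C : ℝ, u ≤ v → (∀ x ∈ Icc u v, g x = C) →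
      R v ^ 2 - R u ^ 2 = C * (v - u) := by
    intro u v C huv hC
    rw [← henergy, h.right_inv, h.right_inv, intervalIntegral.integral_congr (g := fun _ => C)]
    · simp [mul_comm]
    · intro t ht
      rw [uIcc_of_le huv] at ht
      exact hC t ht
  have hQ := continuous_quarterTime h.cont
  have hRa : 0 < R a := by rw [← hR0]; exact hRmono ha
  have hRaL : R a < R (2 * a - c) := hRmono (by linarith)
  have hplatR : R (2 * a - c) ^ 2 - R a ^ 2 = γ * (a - c) := by
    rw [hconst a (2 * a - c) γ (by linarith) hgplat]
    ring
  have hQ0 : 1 < quarterTime s 0 := by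
    rw [h.quarterTime_zero, one_lt_div (by linarith)]
    linarith
  -- Otherwise the area comparison reads `4a (a - c) ≤ γ (a - c) ≤ (2a - c)² - (corner side)²`,
  -- while the side of the corner is at least `(a - c) / 2 > c`.
  obtain ⟨ρm, hρm, hQm⟩ : ∃ ρm ∈ Icc (R a) (R (2 * a - c)), quarterTime s ρm < 1 := by
    by_contra hcon
    push Not at hcon
    have harea := h.area_le hRa hRaL.le hcon
    set ρ := R (2 * a - c) with hρ
    have hSρ : S ρ = 2 * a - c := h.right_inv _
    have hρ0 : 0 < ρ := hRa.trans hRaL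
    have hb0 : 0 ≤ S (ρ / √2) := by
      rw [← h.map_zero]
      exact h.strictMono.monotone (by positivity)
    have h1 := henergy_le (ρ / √2) ρ hb0
      (div_le_self hρ0.le (Real.one_le_sqrt.2 one_le_two)) (by rw [hSρ]; linarith)
    rw [div_pow, Real.sq_sqrt zero_le_two] at h1
    have h2 : γ * ((a - c) / 2) ≤ γ * (S ρ - S (ρ / √2)) := by nlinarith [sq_nonneg (R a)]
    have h3 := le_of_mul_le_mul_left h2 hγ
    have h4 : c < S ρ - S (ρ / √2) := by linarith
    have h5 : c ^ 2 < (S ρ - S (ρ / √2)) ^ 2 := pow_lt_pow_left₀ h4 hc.le two_ne_zero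
    have h6 : 4 * a * (a - c) ≤ γ * (a - c) := mul_le_mul_of_nonneg_right h4a (by linarith)
    rw [hplatR] at harea
    have h7 : S ρ ^ 2 = 4 * a ^ 2 - 4 * a * c + c ^ 2 := by rw [hSρ]; ring
    nlinarith
  -- The corner point `y = S √(δ (γ - 2a))` has energy `δ (γ - 2a) ≥ δ γ / 2` and `g ≤ γ` below it,
  -- hence `2 y ≥ δ`.
  have hQγ : 1 < quarterTime s (R γ) := by
    have hb : R (2 * a - c) < R (2 * a) := hRmono (by linarith)
    have hb0 : 0 < R (2 * a) := by linarith
    have htailR : R γ ^ 2 - R (2 * a) ^ 2 = δ * (γ - 2 * a) :=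
      hconst _ _ δ (by linarith) fun x hx => hgtail x hx.1
    have hb2 : δ * (γ - 2 * a) < R (2 * a) ^ 2 := by
      have h1 : R (2 * a - c) ^ 2 ≤ R (2 * a) ^ 2 := pow_le_pow_left₀ (by linarith) hb.le 2
      have h2 : δ * γ < (a - c) * γ := mul_lt_mul_of_pos_right hδac hγ
      nlinarith [sq_nonneg (R a), mul_pos hδ ha]
    have hlt := h.lt_quarterTime hδ hb0 (hRmono (by linarith : 2 * a < γ)) (by linarith)
      (fun r hr => hgtail _ (by
        rw [← h.right_inv (2 * a)]; exact h.strictMono.monotone hr.1))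
    refine lt_of_le_of_lt ?_ hlt
    rw [one_le_div hδ, htailR]
    have hnn : 0 ≤ δ * (γ - 2 * a) := mul_nonneg hδ.le (by linarith)
    have h1 := henergy_le 0 √(δ * (γ - 2 * a)) h.map_zero.ge (Real.sqrt_nonneg _) 
      ((h.strictMono.monotone (Real.sqrt_le_iff.2 ⟨hb0.le, hb2.le⟩)).trans_eq (h.right_inv _))
    rw [Real.sq_sqrt hnn, h.map_zero] at h1
    have h2 : γ * δ ≤ γ * (2 * S √(δ * (γ - 2 * a))) := by nlinarith
    exact le_of_mul_le_mul_left h2 hγ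
  have hρm0 : 0 < ρm := hRa.trans_le hρm.1
  have hρmγ : ρm < R γ := hρm.2.trans_lt (hRmono (by linarith))
  obtain ⟨ρ₁, ⟨hρ₁, hρ₁m⟩, hQ₁⟩ := intermediate_value_Ioo' hρm0.le hQ.continuousOn ⟨hQm, hQ0⟩
  obtain ⟨ρ₂, ⟨hρ₂m, hρ₂⟩, hQ₂⟩ := intermediate_value_Ioo hρmγ.le hQ.continuousOn ⟨hQm, hQγ⟩
  have hSγ : ∀ ρ, ρ < R γ → S ρ ≤ γ := fun ρ hρ => by
    rw [← h.right_inv γ]; exact h.strictMono.monotone hρ.le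
  have hS0 : ∀ ρ, 0 < ρ → 0 < S ρ := fun ρ hρ => by
    rw [← h.map_zero]; exact h.strictMono hρ
  obtain ⟨p, hp1, hp2, hp3, hp4, hp5, hp6⟩ := h.exists_sop hρ₁ hQ₁
  obtain ⟨q, hq1, hq2, hq3, hq4, hq5, hq6⟩ := h.exists_sop (hρm0.trans hρ₂m) hQ₂
  have hp : IsSOP f p ∧ PeriodThreeZeros p := by
    refine isSOP_of_quarter (hS0 _ hρ₁) (fun t => ?_) hp2 hp4 hp5 hp6
    have := hp1 t
    rwa [hgf _ ((hp3 _).trans (hSγ _ ((hρ₁m.trans hρmγ)))), neg_neg] at this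
  have hq : IsSOP f q ∧ PeriodThreeZeros q := by
    refine isSOP_of_quarter (hS0 _ (hρm0.trans hρ₂m)) (fun t => ?_) hq2 hq4 hq5 hq6
    have := hq1 t
    rwa [hgf _ ((hq3 _).trans (hSγ _ hρ₂)), neg_neg] at this
  -- The two solutions have different maxima `S ρ₁ < S ρ₂`.
  refine ⟨p, q, hp.1, hq.1, fun σ => ⟨0, fun heq => ?_⟩, hp.2, hq.2⟩
  have h1 : S ρ₁ < S ρ₂ := h.strictMono (hρ₁m.trans hρ₂m)
  have h2 := (le_abs_self _).trans (hp3 (0 + σ))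
  rw [← heq, hq2] at h2
  linarith
end

section
/- Given reals a, c, δ, γ > 0 satisfying (i) c < min(a, δ), (ii) γ ≥ 4a and γ > δ, (iii) δ + (c/δ)·γ ≤ a, suppose f satisfies (H) and (H''), is locally Lipschitz, is constant on [ρ, ∞) for some ρ > 0, and f'(0) < -π/2. Then the equation x'(t) = f(x(t-1)) has an SOP solution with minimal period strictly greater than 4, and also a Kaplan–Yorke solution, i.e., an SOP solution x of minimal period 4 with x(t) = -x(t-2) for all t ∈ ℝ. -/
/-!
Both solutions are antiperiodic, `p (t + h) = -p (t)`, with zero set a single coset `z + hℤ`;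
`sop_of_antiperiodic` shows that such a solution is an SOP solution of minimal period `2h`.

*Period greater than `4`.* The solution starting with `x (t) = 2a - δt` on `[0, 1]` is followed by
the method of steps (`exists_long_half_period`). By (iii) it stays in `[a, 2a - c]` during the unit
interval `[c/δ, 1 + c/δ]`, hence falls with slope `-γ` during the next one, from a value
`v ∈ [a, 2a - δ]` to a value below `-2a`. Because `f` is odd and `γ ≥ 4a`, it then remains in
`[-γ, -2a]` for at least a unit of time, until it climbs with slope `δ` to `-2a` at some time
`h > 2`. Since its history there lies in `[-γ, -2a]`, it continues as `-2a + δ (t - h)` on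
`[h, h + 1]`, which is the negative of the initial segment. Therefore `x (t + h) = -x (t)`, and `x`
extends to an antiperiodic solution on `ℝ`.

*Kaplan–Yorke solution.* With `y (t) = x (t - 1)` and `x (t - 2) = -x (t)`, the equation becomes
the Hamiltonian system `x' = f (y)`, `y' = -f (x)`. Let `σ` be the inverse of
`s (x) = sign (x) √(-2 ∫₀ˣ f)`, which is `C¹` with even positive derivative `m`
(`exists_straightening`). On the level curve `(s (x), s (y)) = R (cos θ, sin θ)` the angle satisfies
`θ' = 1 / (m (R cos θ) m (R sin θ))`, so the quarter period is the integral of the reciprocal over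
`[0, π/2]`. It is continuous in `R`, equals `-π / (2 f'(0)) < 1` at `R = 0`, and exceeds `1` for
large `R`, so some `R > 0` gives quarter period `1` (`exists_radius`).
-/

open Set Filter

/-! ### Antiperiodic solutions -/

/-- If `p` solves the equation, is antiperiodic with antiperiod `h > 1`, and vanishes exactly
on `z + hℤ`, then it is an SOP solution of minimal period `2h`. -/
lemma sop_of_antiperiodic {f p : ℝ → ℝ} {h z : ℝ} (hh : 1 < h)
    (hp : ∀ t : ℝ, HasDerivAt p (f (p (t - 1))) t) (hanti : ∀ t, p (t + h) = -p t)
    (hz : p z = 0) (hzero : ∀ t, p t = 0 → ∃ k : ℤ, t = z + k * h) (hne : ∃ t, p t ≠ 0) :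
    IsSOP f p ∧ MinPeriod p (2 * h) := by
  have hper : ∀ t, p (t + 2 * h) = p t := by
    intro t
    rw [show t + 2 * h = t + h + h by ring, hanti, hanti, neg_neg]
  refine ⟨⟨hp, ⟨2 * h, by linarith, hper⟩, ?_, ?_⟩, by linarith, hper, ?_⟩
  · obtain ⟨t, ht⟩ := hne
    exact ⟨t, z, by rwa [hz]⟩
  · intro z₁ z₂ h₁ h₂ hne'
    obtain ⟨k₁, rfl⟩ := hzero z₁ h₁
    obtain ⟨k₂, rfl⟩ := hzero z₂ h₂
    have hk : k₁ - k₂ ≠ 0 := by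
      intro hk
      apply hne'
      rw [sub_eq_zero.mp hk]
    have h1 : (1 : ℝ) ≤ |((k₁ - k₂ : ℤ) : ℝ)| := by
      rw [← Int.cast_abs]
      exact_mod_cast Int.one_le_abs hk
    rw [show z + k₁ * h - (z + k₂ * h) = ((k₁ - k₂ : ℤ) : ℝ) * h by push_cast; ring, abs_mul,
      abs_of_pos (by linarith : 0 < h)]
    nlinarith
  · intro T' hT' hperT
    obtain ⟨k, hk⟩ := hzero (z + T') (by rw [hperT, hz])
    have hk' : T' = k * h := by linarith
    have hkpos : 0 < k := by
      by_contra hcon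
      have : (k : ℝ) ≤ 0 := by exact_mod_cast not_lt.mp hcon
      nlinarith
    have hk1 : k ≠ 1 := by
      rintro rfl
      obtain ⟨t, ht⟩ := hne
      have h1 := hperT t
      rw [hk', Int.cast_one, one_mul, hanti] at h1
      apply ht
      linarith
    have hk2 : (2 : ℝ) ≤ k := by exact_mod_cast (by omega : (2 : ℤ) ≤ k)
    rw [hk']
    nlinarith

/-! ### The Kaplan–Yorke solution -/

/-- A surjective function with positive derivative has a differentiable inverse. -/
lemma exists_smooth_inverse {F F' : ℝ → ℝ} (hF : ∀ x, HasDerivAt F (F' x) x)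
    (hpos : ∀ x, 0 < F' x) (hsurj : Function.Surjective F) :
    ∃ σ : ℝ → ℝ, (∀ y, F (σ y) = y) ∧ (∀ x, σ (F x) = x) ∧ Continuous σ ∧
      ∀ y, HasDerivAt σ (F' (σ y))⁻¹ y := by
  have hmono : StrictMono F := strictMono_of_hasDerivAt_pos hF hpos
  let e := hmono.orderIsoOfSurjective F hsurj
  have h1 : ∀ y, F (e.symm y) = y := fun y => e.apply_symm_apply y
  have h2 : ∀ x, e.symm (F x) = x := fun x => e.symm_apply_apply x
  refine ⟨e.symm, h1, h2, e.symm.continuous, fun y => ?_⟩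
  exact HasDerivAt.of_local_left_inverse e.symm.continuous.continuousAt (hF _) (hpos _).ne'
    (Eventually.of_forall h1)

/-- The coordinate `s` straightening the potential: with `ℓ (x) = -f (x) / x` and
`G (x) = ∫₀ˣ u ℓ (u) du`, the function `s (x) = sign (x) √(2 G (x))` is an odd `C¹` bijection
of `ℝ` with derivative `-f / s` away from `0`.  Its inverse `σ` has derivative `m`, described here. -/
lemma exists_straightening {f : ℝ → ℝ} (hc : Continuous f)
    (hneg : ∀ x : ℝ, x ≠ 0 → x * f x < 0) (hdiff : DifferentiableAt ℝ f 0)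
    (hder : deriv f 0 < 0) (hodd : ∀ x : ℝ, f (-x) = -f x)
    (hconst : ∃ ρ : ℝ, 0 < ρ ∧ ∀ x : ℝ, ρ ≤ x → f x = f ρ) :
    ∃ σ m : ℝ → ℝ, (∀ w, HasDerivAt σ (m w) w) ∧ Continuous m ∧ (∀ w, 0 < m w) ∧
      (∀ w, σ (-w) = -σ w) ∧ (∀ w, m (-w) = m w) ∧ (∀ w, σ w = 0 → w = 0) ∧
      (∀ w, w = -f (σ w) * m w) ∧ m 0 * m 0 = (-deriv f 0)⁻¹ := by
  have hf0 : f 0 = 0 := by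
    have := hodd 0
    rw [neg_zero] at this
    linarith
  set ℓ : ℝ → ℝ := fun x => -dslope f 0 x with hℓ
  have hℓc : Continuous ℓ := by
    refine Continuous.neg ?_
    rw [continuous_iff_continuousAt]
    intro x
    by_cases hx : x = 0
    · rw [hx]
      exact continuousAt_dslope_same.mpr hdiff
    · exact (continuousAt_dslope_of_ne hx).mpr hc.continuousAt
  have hℓ0 : ℓ 0 = -deriv f 0 := by simp [hℓ]
  have hℓf : ∀ x, x * ℓ x = -f x := by
    intro x
    have := sub_smul_dslope f 0 x
    simp only [sub_zero, smul_eq_mul, hf0] at this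
    simp only [hℓ]
    linarith
  have hℓpos : ∀ x, 0 < ℓ x := by
    intro x
    by_cases hx : x = 0
    · rw [hx, hℓ0]; linarith
    · have h1 := hneg x hx
      have h2 := hℓf x
      have h3 : 0 < x ^ 2 * ℓ x := by
        rw [sq, mul_assoc, h2]
        linarith
      exact pos_of_mul_pos_right h3 (sq_nonneg x)
  have hℓeven : ∀ x, ℓ (-x) = ℓ x := by
    intro x
    by_cases hx : x = 0
    · rw [hx, neg_zero]
    · have h1 := hℓf x
      have h2 := hℓf (-x)
      rw [hodd] at h2
      apply mul_left_cancel₀ hx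
      linarith
  set G : ℝ → ℝ := fun x => ∫ u in (0 : ℝ)..x, u * ℓ u with hG
  have hgc : Continuous fun u => u * ℓ u := by fun_prop
  have hGd : ∀ x, HasDerivAt G (x * ℓ x) x := fun x => by
    exact intervalIntegral.integral_hasDerivAt_right (hgc.intervalIntegrable _ _)
      (hgc.stronglyMeasurableAtFilter _ _) hgc.continuousAt
  set q : ℝ → ℝ := fun x => 2 * ∫ v in (0 : ℝ)..1, v * ℓ (v * x) with hq
  have hqc : Continuous q := by
    refine continuous_const.mul ?_
    exact intervalIntegral.continuous_parametric_intervalIntegral_of_continuous' (by fun_prop) _ _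
  have hqpos : ∀ x, 0 < q x := by
    intro x
    refine mul_pos two_pos ?_
    refine intervalIntegral.intervalIntegral_pos_of_pos_on ?_ ?_ one_pos
    · exact Continuous.intervalIntegrable (by fun_prop) _ _
    · intro v hv
      exact mul_pos hv.1 (hℓpos _)
  have hqeven : ∀ x, q (-x) = q x := by
    intro x
    simp only [hq, mul_neg, hℓeven]
  have hq0 : q 0 = ℓ 0 := by
    simp only [hq, mul_zero, intervalIntegral.integral_mul_const, integral_id]
    ring
  have hqG : ∀ x, x ^ 2 * q x = 2 * G x := by
    intro x
    have h1 := intervalIntegral.mul_integral_comp_mul_right (a := 0) (b := 1)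
      (f := fun u => u * ℓ u) x
    simp only [zero_mul, one_mul] at h1
    simp only [hG, hq]
    rw [← h1, ← mul_assoc, mul_comm _ (2 : ℝ), mul_assoc]
    congr 1
    rw [← intervalIntegral.integral_const_mul, ← intervalIntegral.integral_const_mul]
    congr 1
    ext v
    ring
  set s : ℝ → ℝ := fun x => x * √(q x) with hs
  have hsodd : ∀ x, s (-x) = -s x := by
    intro x
    simp only [hs, hqeven]
    ring
  have hsq : ∀ x, 0 < √(q x) := fun x => Real.sqrt_pos.mpr (hqpos x)
  have hspos : ∀ x, 0 < x → s x = √(2 * G x) := by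
    intro x hx
    rw [← hqG, Real.sqrt_mul (sq_nonneg x), Real.sqrt_sq hx.le]
  have hGpos : ∀ x, 0 < x → 0 < 2 * G x := by
    intro x hx
    rw [← hqG]
    exact mul_pos (by positivity) (hqpos x)
  have hsd_pos : ∀ x, 0 < x → HasDerivAt s (ℓ x / √(q x)) x := by
    intro x hx
    have h1 := ((hGd x).const_mul 2).sqrt (hGpos x hx).ne'
    have h2 : 2 * (x * ℓ x) / (2 * √(2 * G x)) = ℓ x / √(q x) := by
      rw [← hspos x hx]
      have := (hsq x).ne'
      simp only [hs]
      field_simp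
    rw [h2] at h1
    refine h1.congr_of_eventuallyEq ?_
    filter_upwards [lt_mem_nhds hx] with y hy
    exact hspos y hy
  have hsd : ∀ x, HasDerivAt s (ℓ x / √(q x)) x := by
    intro x
    rcases lt_trichotomy x 0 with hx | hx | hx
    · have h1 := hsd_pos (-x) (by linarith)
      have h2 := (h1.comp x (hasDerivAt_neg x)).neg
      rw [hℓeven, hqeven] at h2
      rw [mul_neg_one, neg_neg] at h2
      refine h2.congr_of_eventuallyEq (Eventually.of_forall fun y => ?_)
      simp [hsodd]
    · -- at the origin the difference quotient of `s` is `√q`, which is continuous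
      subst hx
      rw [hasDerivAt_iff_tendsto_slope]
      have h1 : ℓ 0 / √(q 0) = √(q 0) := by
        rw [← hq0]
        exact Real.div_sqrt
      rw [h1]
      have h2 : Tendsto (fun x => √(q x)) (nhdsWithin 0 {0}ᶜ) (nhds (√(q 0))) :=
        (hqc.sqrt.tendsto 0).mono_left nhdsWithin_le_nhds
      refine h2.congr' ?_
      filter_upwards [self_mem_nhdsWithin] with y hy
      have hy' : y ≠ 0 := hy
      simp only [hs, slope_def_field]
      field_simp
      simp
    · exact hsd_pos x hx
  have hsc : Continuous s := by simp only [hs]; fun_prop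
  have htop : Tendsto s atTop atTop := by
    obtain ⟨ρ, hρ, hρc⟩ := hconst
    have hκ : 0 < -f ρ := by
      have := hneg ρ hρ.ne'
      nlinarith
    have hlin : ∀ x, ρ ≤ x → G x = G ρ + (-f ρ) * (x - ρ) := by
      intro x hx
      have h1 : (∫ u in ρ..x, u * ℓ u) = ∫ u in ρ..x, -f ρ := by
        refine intervalIntegral.integral_congr fun u hu => ?_
        rw [uIcc_of_le hx] at hu
        simp only [hℓf, hρc u hu.1]
      have h2 := intervalIntegral.integral_add_adjacent_intervals
        (hgc.intervalIntegrable (μ := MeasureTheory.volume) 0 ρ) (hgc.intervalIntegrable ρ x)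
      simp only [hG]
      rw [← h2, h1, intervalIntegral.integral_const, smul_eq_mul]
      ring
    have h3 : Tendsto (fun x => 2 * (G ρ + (-f ρ) * (x - ρ))) atTop atTop := by
      refine Tendsto.const_mul_atTop two_pos ?_
      refine tendsto_atTop_add_const_left _ _ ?_
      refine Tendsto.const_mul_atTop hκ ?_
      exact tendsto_atTop_add_const_right _ _ tendsto_id
    refine (Real.tendsto_sqrt_atTop.comp h3).congr' ?_
    filter_upwards [eventually_ge_atTop ρ] with x hx
    simp only [Function.comp]
    rw [← hlin x hx, hspos x (by linarith)]
  have hbot : Tendsto s atBot atBot := by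
    have h1 := tendsto_neg_atTop_atBot.comp (htop.comp tendsto_neg_atBot_atTop)
    refine h1.congr fun x => ?_
    simp [hsodd]
  obtain ⟨σ, hσ1, hσ2, hσc, hσd⟩ := exists_smooth_inverse hsd
    (fun x => div_pos (hℓpos x) (hsq x)) (hsc.surjective htop hbot)
  have hσodd : ∀ w, σ (-w) = -σ w := by
    intro w
    rw [← hσ2 (-σ w), hsodd, hσ1]
  have hσ0 : σ 0 = 0 := by
    have := hσ2 0
    simpa [hs] using this
  refine ⟨σ, fun w => (ℓ (σ w) / √(q (σ w)))⁻¹, hσd, ?_, ?_, hσodd, ?_, ?_, ?_, ?_⟩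
  · refine Continuous.inv₀ ?_ fun w => (div_pos (hℓpos _) (hsq _)).ne'
    exact (hℓc.comp hσc).div (hqc.comp hσc).sqrt fun w => (hsq _).ne'
  · exact fun w => inv_pos.mpr (div_pos (hℓpos _) (hsq _))
  · intro w
    simp only [hσodd, hℓeven, hqeven]
  · intro w hw
    rw [← hσ1 w, hw]
    simp [hs]
  · intro w
    rw [← hℓf]
    have h1 : σ w * √(q (σ w)) = w := hσ1 w
    have h2 := (hℓpos (σ w)).ne'
    simp only [inv_div]
    rw [mul_div_assoc', mul_right_comm, mul_div_assoc, div_self h2, mul_one, h1]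
  · simp only [hσ0, hq0, inv_div]
    rw [div_mul_div_comm, Real.mul_self_sqrt (hℓpos 0).le, ← hℓ0]
    have := (hℓpos 0).ne'
    field_simp

/-- In the coordinates `(s (x), s (y)) = R (cos θ, sin θ)` the planar system `x' = f (y)`,
`y' = -f (x)` reads `θ' = 1 / (m (R cos θ) m (R sin θ))`.  Its quarter period equals `1` for a
suitable `R > 0`, because it tends to `-π / (2 f'(0)) < 1` as `R → 0` and grows at least like `R²`. -/
lemma exists_radius {f σ m : ℝ → ℝ} (hder : deriv f 0 < -(Real.pi / 2))
    (hbdd : ∃ M, ∀ x, |f x| ≤ M) (hmc : Continuous m) (hmpos : ∀ w, 0 < m w)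
    (hmf : ∀ w, w = -f (σ w) * m w) (hm0 : m 0 * m 0 = (-deriv f 0)⁻¹) :
    ∃ R : ℝ, 0 < R ∧
      ∫ θ in (0 : ℝ)..(Real.pi / 2), m (R * Real.cos θ) * m (R * Real.sin θ) = 1 := by
  have hpi := Real.pi_pos
  obtain ⟨M, hM⟩ := hbdd
  have hM0 : 0 ≤ M := (abs_nonneg _).trans (hM 0)
  set Q : ℝ → ℝ := fun R =>
    ∫ θ in (0 : ℝ)..(Real.pi / 2), m (R * Real.cos θ) * m (R * Real.sin θ) with hQ
  have hQc : Continuous Q :=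
    intervalIntegral.continuous_parametric_intervalIntegral_of_continuous' (by fun_prop) _ _
  have hQ0 : Q 0 < 1 := by
    simp only [hQ, zero_mul, hm0, intervalIntegral.integral_const, smul_eq_mul, sub_zero]
    rw [← div_eq_mul_inv, div_lt_one (by linarith)]
    linarith
  have hN : 0 < M + 1 := by linarith
  have hlow : ∀ w, 0 ≤ w → w / (M + 1) ≤ m w := by
    intro w hw
    rw [div_le_iff₀ hN]
    have h1 := hmf w
    have h2 := (abs_le.mp (hM (σ w))).1
    have h3 := hmpos w
    nlinarith
  have hQ1 : 1 ≤ Q (2 * (M + 1)) := by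
    have h1 : (∫ θ in (0 : ℝ)..(Real.pi / 2), 4 * (Real.sin θ * Real.cos θ)) = 2 := by
      rw [intervalIntegral.integral_const_mul, integral_sin_mul_cos₁]
      simp
      norm_num
    have h2 : (∫ θ in (0 : ℝ)..(Real.pi / 2), 4 * (Real.sin θ * Real.cos θ))
        ≤ Q (2 * (M + 1)) := by
      refine intervalIntegral.integral_mono_on (by linarith)
        (Continuous.intervalIntegrable (by fun_prop) _ _)
        (Continuous.intervalIntegrable (by fun_prop) _ _) fun θ hθ => ?_
      have hcos : 0 ≤ Real.cos θ := Real.cos_nonneg_of_mem_Icc ⟨by linarith [hθ.1], hθ.2⟩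
      have hsin : 0 ≤ Real.sin θ := Real.sin_nonneg_of_nonneg_of_le_pi hθ.1 (by linarith [hθ.2])
      have h3 := hlow (2 * (M + 1) * Real.cos θ) (by positivity)
      have h4 := hlow (2 * (M + 1) * Real.sin θ) (by positivity)
      rw [show 2 * (M + 1) * Real.cos θ / (M + 1) = 2 * Real.cos θ by field_simp] at h3
      rw [show 2 * (M + 1) * Real.sin θ / (M + 1) = 2 * Real.sin θ by field_simp] at h4
      calc 4 * (Real.sin θ * Real.cos θ) = (2 * Real.cos θ) * (2 * Real.sin θ) := by ring
        _ ≤ _ := mul_le_mul h3 h4 (by positivity) (hmpos _).le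
    linarith
  obtain ⟨R, hR, hQR⟩ := intermediate_value_Icc (by positivity : (0 : ℝ) ≤ 2 * (M + 1))
    hQc.continuousOn ⟨hQ0.le, hQ1⟩
  refine ⟨R, lt_of_le_of_ne hR.1 ?_, hQR⟩
  rintro rfl
  exact hQ0.ne hQR

lemma exists_kaplan_yorke {f : ℝ → ℝ} (hc : Continuous f)
    (hneg : ∀ x : ℝ, x ≠ 0 → x * f x < 0) (hdiff : DifferentiableAt ℝ f 0)
    (hder : deriv f 0 < -(Real.pi / 2)) (hodd : ∀ x : ℝ, f (-x) = -f x)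
    (hconst : ∃ ρ : ℝ, 0 < ρ ∧ ∀ x : ℝ, ρ ≤ x → f x = f ρ) :
    ∃ x : ℝ → ℝ, IsKY f x := by
  have hpi := Real.pi_pos
  obtain ⟨σ, m, hσd, hmc, hmpos, hσodd, hmeven, hσ0, hmf, hm0⟩ :=
    exists_straightening hc hneg hdiff (by linarith) hodd hconst
  have hbdd : ∃ M, ∀ x, |f x| ≤ M := by
    obtain ⟨ρ, hρ, hρc⟩ := hconst
    obtain ⟨M, hM⟩ := (isCompact_Icc (a := (0 : ℝ)) (b := ρ)).exists_bound_of_continuousOn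
      hc.continuousOn
    have h1 : ∀ x, 0 ≤ x → |f x| ≤ M := by
      intro x hx
      rcases le_total x ρ with h | h
      · exact hM x ⟨hx, h⟩
      · rw [hρc x h]
        exact hM ρ ⟨hρ.le, le_rfl⟩
    refine ⟨M, fun x => ?_⟩
    rcases le_total 0 x with h | h
    · exact h1 x h
    · have := h1 (-x) (by linarith)
      rwa [hodd, abs_neg] at this
  obtain ⟨R, hR, hRint⟩ := exists_radius hder hbdd hmc hmpos hmf hm0
  set h : ℝ → ℝ := fun θ => m (R * Real.cos θ) * m (R * Real.sin θ) with hh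
  have hhc : Continuous h := by fun_prop
  have hhpos : ∀ θ, 0 < h θ := fun θ => mul_pos (hmpos _) (hmpos _)
  have hhper : Function.Periodic h (Real.pi / 2) := by
    intro θ
    simp only [hh, Real.cos_add_pi_div_two, Real.sin_add_pi_div_two, mul_neg, hmeven]
    ring
  -- `τ` is the time at which the orbit reaches the angle `θ`
  set τ : ℝ → ℝ := fun θ => ∫ u in (0 : ℝ)..θ, h u with hτ
  have hτd : ∀ θ, HasDerivAt τ (h θ) θ := fun θ => by
    exact intervalIntegral.integral_hasDerivAt_right (hhc.intervalIntegrable _ _)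
      (hhc.stronglyMeasurableAtFilter _ _) hhc.continuousAt
  have hτ0 : τ 0 = 0 := by simp [hτ]
  have hτper : ∀ θ, τ (θ + Real.pi / 2) = τ θ + 1 := by
    intro θ
    have h1 := intervalIntegral.integral_add_adjacent_intervals
      (hhc.intervalIntegrable (μ := MeasureTheory.volume) 0 θ)
      (hhc.intervalIntegrable θ (θ + Real.pi / 2))
    rw [hhper.intervalIntegral_add_eq θ 0, zero_add, hRint] at h1
    exact h1.symm
  have hτn : ∀ n : ℕ, τ (n * (Real.pi / 2)) = n := by
    intro n
    induction n with
    | zero => simp [hτ0]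
    | succ k ih =>
      rw [Nat.cast_succ, add_mul, one_mul, hτper, ih]
  have hτn' : ∀ n : ℕ, τ (-(n * (Real.pi / 2))) = -n := by
    intro n
    induction n with
    | zero => simp [hτ0]
    | succ k ih =>
      have h1 := hτper (-((k + 1 : ℕ) * (Real.pi / 2)))
      rw [show -(((k + 1 : ℕ) : ℝ) * (Real.pi / 2)) + Real.pi / 2 = -(k * (Real.pi / 2)) by
        push_cast; ring, ih] at h1
      push_cast at h1 ⊢
      linarith
  have hτc : Continuous τ := continuous_iff_continuousAt.mpr fun θ => (hτd θ).continuousAt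
  have hτsurj : Function.Surjective τ := by
    intro y
    obtain ⟨n, hn⟩ := exists_nat_ge |y|
    have h1 := abs_le.mp hn
    have h2 : -(n * (Real.pi / 2)) ≤ n * (Real.pi / 2) := by
      have : (0 : ℝ) ≤ n * (Real.pi / 2) := by positivity
      linarith
    obtain ⟨θ, -, hθ⟩ := intermediate_value_Icc h2 hτc.continuousOn
      (show y ∈ Icc _ _ by rw [hτn, hτn']; exact h1)
    exact ⟨θ, hθ⟩
  obtain ⟨Θ, hΘ1, hΘ2, -, hΘd⟩ := exists_smooth_inverse hτd hhpos hτsurj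
  have hΘshift : ∀ t, Θ (t - 1) = Θ t - Real.pi / 2 := by
    intro t
    rw [← hΘ2 (Θ t - Real.pi / 2)]
    congr 1
    have h1 := hτper (Θ t - Real.pi / 2)
    rw [sub_add_cancel, hΘ1] at h1
    linarith
  set p : ℝ → ℝ := fun t => σ (R * Real.cos (Θ t)) with hp
  have hp1 : ∀ t, p (t - 1) = σ (R * Real.sin (Θ t)) := by
    intro t
    simp only [hp, hΘshift, Real.cos_sub_pi_div_two]
  have hp2 : ∀ t, p t = -p (t - 2) := by
    intro t
    have h1 : Θ (t - 2) = Θ t - Real.pi := by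
      rw [show t - 2 = t - 1 - 1 by ring, hΘshift, hΘshift]
      ring
    simp only [hp, h1, Real.cos_sub_pi, mul_neg, hσodd, neg_neg]
  have hpd : ∀ t, HasDerivAt p (f (p (t - 1))) t := by
    intro t
    have h1 := ((Real.hasDerivAt_cos (Θ t)).comp t (hΘd t)).const_mul R
    have h2 := (hσd (R * Real.cos (Θ t))).comp t h1
    refine h2.congr_deriv ?_
    rw [hp1]
    have h3 := hmf (R * Real.sin (Θ t))
    have h4 := (hmpos (R * Real.sin (Θ t))).ne'
    have h5 := (hmpos (R * Real.cos (Θ t))).ne'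
    simp only [hh]
    field_simp
    linarith
  have hΘn : ∀ n : ℤ, Θ n = n * (Real.pi / 2) := by
    intro n
    rw [← hΘ2 (n * (Real.pi / 2))]
    congr 1
    obtain ⟨k, rfl | rfl⟩ := n.eq_nat_or_neg
    · exact_mod_cast (hτn k).symm
    · have := hτn' k
      push_cast
      rw [neg_mul, this]
  have hz : p 1 = 0 := by
    have h1 := hΘn 1
    have h2 : σ 0 = 0 := by
      have := hσodd 0
      rw [neg_zero] at this
      linarith
    simp only [Int.cast_one, one_mul] at h1
    simp [hp, h1, h2]
  have hzero : ∀ t, p t = 0 → ∃ k : ℤ, t = 1 + k * 2 := by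
    intro t ht
    have h1 := hσ0 _ ht
    have h2 : Real.cos (Θ t) = 0 := by
      rcases mul_eq_zero.mp h1 with h | h
      · exact absurd h hR.ne'
      · exact h
    obtain ⟨k, hk⟩ := Real.cos_eq_zero_iff.mp h2
    refine ⟨k, ?_⟩
    have h3 := hΘn (2 * k + 1)
    rw [← hΘ1 t, hk, ← hΘ1 ((1 : ℝ) + k * 2)]
    congr 1
    push_cast at h3
    rw [show (1 : ℝ) + k * 2 = 2 * k + 1 by ring, h3]
    ring
  have hne : ∃ t, p t ≠ 0 := by
    refine ⟨0, fun h0 => ?_⟩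
    obtain ⟨k, hk⟩ := hzero 0 h0
    have : (0 : ℤ) = 1 + k * 2 := by exact_mod_cast hk
    omega
  have hanti : ∀ t, p (t + 2) = -p t := by
    intro t
    rw [hp2, add_sub_cancel_right]
  obtain ⟨h1, h2⟩ := sop_of_antiperiodic (by norm_num : (1 : ℝ) < 2) hpd hanti hz hzero hne
  rw [show (2 : ℝ) * 2 = 4 by norm_num] at h2
  exact ⟨p, h1, h2, hp2⟩

/-! ### A solution of period greater than `4` -/

/-- Method of steps: the initial function `φ` on `(-∞, 1]` extends to a solution for `t > 1`. -/
lemma exists_forward_solution {f φ : ℝ → ℝ} (hf : Continuous f) (hφ : Continuous φ) :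
    ∃ x : ℝ → ℝ, Continuous x ∧ (∀ t, t ≤ 1 → x t = φ t) ∧
      ∀ t, 1 < t → HasDerivAt x (f (x (t - 1))) t := by
  -- `X n` is the solution up to time `n + 1`
  let X : ℕ → ℝ → ℝ := fun n => Nat.rec φ
    (fun _ Y t => φ (min t 1) + ∫ u in (1 : ℝ)..(max t 1), f (Y (u - 1))) n
  have hXs : ∀ n t, X (n + 1) t = φ (min t 1) + ∫ u in (1 : ℝ)..(max t 1), f (X n (u - 1)) :=
    fun n t => rfl
  have hX0 : X 0 = φ := rfl
  have hXc : ∀ n, Continuous (X n) := by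
    intro n
    induction n with
    | zero => exact hφ
    | succ n ih =>
      have h1 : Continuous fun u => f (X n (u - 1)) := by fun_prop
      have h2 := intervalIntegral.continuous_primitive (μ := MeasureTheory.volume)
        (fun a b => h1.intervalIntegrable a b) 1
      have h3 : X (n + 1) = fun t => φ (min t 1) + ∫ u in (1 : ℝ)..(max t 1), f (X n (u - 1)) :=
        funext (hXs n)
      rw [h3]
      exact (hφ.comp (continuous_id.min continuous_const)).add
        (h2.comp (continuous_id.max continuous_const))
  have hXstep : ∀ n : ℕ, ∀ t : ℝ, t ≤ n + 1 → X (n + 1) t = X n t := by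
    intro n
    induction n with
    | zero =>
      intro t ht
      have ht' : t ≤ 1 := by simpa using ht
      rw [hXs, hX0, max_eq_right ht', min_eq_left ht', intervalIntegral.integral_same, add_zero]
    | succ n ih =>
      intro t ht
      rw [hXs (n + 1), hXs n]
      congr 1
      refine intervalIntegral.integral_congr fun u hu => ?_
      rw [uIcc_of_le (le_max_right _ _)] at hu
      have hu2 : u ≤ n + 1 + 1 := by
        refine hu.2.trans (max_le ?_ ?_)
        · push_cast at ht; exact ht
        · have : (0 : ℝ) ≤ n := n.cast_nonneg
          linarith
      simp only [ih (u - 1) (by linarith)]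
  have hXle : ∀ n k : ℕ, ∀ t : ℝ, t ≤ n + 1 → X (n + k) t = X n t := by
    intro n k t ht
    induction k with
    | zero => rfl
    | succ k ih =>
      rw [← add_assoc, hXstep (n + k) t, ih]
      push_cast
      have : (0 : ℝ) ≤ k := k.cast_nonneg
      linarith
  set x : ℝ → ℝ := fun t => X ⌈t⌉₊ t with hx
  have hxX : ∀ n : ℕ, ∀ t : ℝ, t ≤ n + 1 → x t = X n t := by
    intro n t ht
    rcases le_total n ⌈t⌉₊ with h | h
    · obtain ⟨k, hk⟩ := Nat.exists_eq_add_of_le h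
      simp only [hx]
      rw [hk, hXle n k t ht]
    · obtain ⟨k, hk⟩ := Nat.exists_eq_add_of_le h
      rw [hk, hXle _ k t (by linarith [Nat.le_ceil t])]
  have hxe : ∀ n : ℕ, ∀ t : ℝ, t < n + 1 → x =ᶠ[nhds t] X n := by
    intro n t ht
    filter_upwards [gt_mem_nhds ht] with u hu
    exact hxX n u (le_of_lt hu)
  refine ⟨x, ?_, ?_, ?_⟩
  · rw [continuous_iff_continuousAt]
    intro t
    obtain ⟨n, hn⟩ := exists_nat_gt t
    exact (hXc n).continuousAt.congr (hxe n t (by linarith)).symm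
  · intro t ht
    rw [hxX 0 t (by simpa using ht), hX0]
  · intro t ht
    obtain ⟨n, hn⟩ := exists_nat_gt t
    have h1 : Continuous fun u => f (X n (u - 1)) := by
      have := hXc n
      fun_prop
    have h2 : HasDerivAt (fun t => ∫ u in (1 : ℝ)..t, f (X n (u - 1))) (f (X n (t - 1))) t :=
      intervalIntegral.integral_hasDerivAt_right (h1.intervalIntegrable _ _)
        (h1.stronglyMeasurableAtFilter _ _) h1.continuousAt
    have h3 := h2.const_add (φ 1)
    rw [← hxX n (t - 1) (by linarith)] at h3
    refine h3.congr_of_eventuallyEq ?_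
    filter_upwards [hxe (n + 1) t (by push_cast; linarith), lt_mem_nhds ht] with u hu hu'
    rw [hu, hXs, min_eq_right (le_of_lt hu'), max_eq_left (le_of_lt hu')]

/-- A forward solution that satisfies `x (t + h) = -x (t)` for `t ≥ 0` extends to an
antiperiodic solution on the whole line. -/
lemma exists_antiperiodic_extension {f x : ℝ → ℝ} {h : ℝ} (hh : 0 < h)
    (hodd : ∀ y : ℝ, f (-y) = -f y)
    (hx : ∀ t, 1 < t → HasDerivAt x (f (x (t - 1))) t)
    (hanti : ∀ t, 0 ≤ t → x (t + h) = -x t) :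
    ∃ p : ℝ → ℝ, (∀ t, HasDerivAt p (f (p (t - 1))) t) ∧ (∀ t, p (t + h) = -p t) ∧
      ∀ t, 0 ≤ t → p t = x t := by
  have hk : ∀ (k : ℕ) t, 0 ≤ t → x (t + k * h) = (-1) ^ k * x t := by
    intro k t ht
    induction k with
    | zero => simp
    | succ k ih =>
      rw [Nat.cast_succ, show t + ((k : ℝ) + 1) * h = t + k * h + h by ring,
        hanti _ (by positivity), ih, pow_succ]
      ring
  have hsq : ∀ k : ℕ, ((-1 : ℝ) ^ k) * (-1) ^ k = 1 := by
    intro k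
    rw [← mul_pow]
    norm_num
  have hfpow : ∀ (k : ℕ) y, f ((-1) ^ k * y) = (-1) ^ k * f y := by
    intro k y
    rcases neg_one_pow_eq_or ℝ k with h | h <;> simp [h, hodd]
  have hex : ∀ t C : ℝ, ∃ n : ℕ, C < t + n * h := by
    intro t C
    obtain ⟨n, hn⟩ := exists_nat_gt ((C - t) / h)
    rw [div_lt_iff₀ hh] at hn
    exact ⟨n, by linarith⟩
  choose N hN using fun t => hex t 0
  set p : ℝ → ℝ := fun t => (-1) ^ N t * x (t + N t * h) with hp
  have hpn : ∀ (n : ℕ) t, 0 ≤ t + n * h → p t = (-1) ^ n * x (t + n * h) := by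
    intro n t ht
    simp only [hp]
    rcases le_total n (N t) with hle | hle
    · obtain ⟨k, hk'⟩ := Nat.exists_eq_add_of_le hle
      rw [hk', Nat.cast_add, add_mul, ← add_assoc, hk k _ ht, pow_add]
      linear_combination ((-1) ^ n * x (t + n * h)) * hsq k
    · obtain ⟨k, hk'⟩ := Nat.exists_eq_add_of_le hle
      rw [hk', Nat.cast_add, add_mul, ← add_assoc, hk k _ (hN t).le, pow_add]
      linear_combination (-((-1) ^ N t * x (t + N t * h))) * hsq k
  refine ⟨p, ?_, ?_, ?_⟩
  · intro t
    obtain ⟨n, hn⟩ := hex t 1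
    have h1 := ((hx (t + n * h) hn).comp_add_const t (n * h)).const_mul ((-1 : ℝ) ^ n)
    rw [hpn n (t - 1) (by linarith), hfpow, show t - 1 + n * h = t + n * h - 1 by ring]
    refine h1.congr_of_eventuallyEq ?_
    filter_upwards [lt_mem_nhds (show 1 - n * h < t by linarith)] with u hu
    exact hpn n u (by linarith)
  · intro t
    obtain ⟨n, hn⟩ := hex t 0
    rw [hpn n t hn.le, hpn n (t + h) (by linarith), show t + h + n * h = t + n * h + h by ring,
      hanti _ hn.le]
    ring
  · intro t ht
    simpa using hpn 0 t (by simpa using ht)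

/-- Bounds for `∫ f` over `[y, v]`, where oddness reduces the integral to one over the interval
with endpoints `|y|` and `v`. -/
lemma integral_bounds {f : ℝ → ℝ} {A γ v y : ℝ} (hc : Continuous f)
    (hodd : ∀ x : ℝ, f (-x) = -f x) (hf : ∀ x ∈ Icc 0 A, -γ ≤ f x ∧ f x ≤ 0) (hγ : 0 ≤ γ)
    (hv : 0 ≤ v) (hvA : v ≤ A) (hy : |y| ≤ A) :
    -(γ * v) ≤ ∫ u in y..v, f u ∧ ∫ u in y..v, f u ≤ γ * (A - v) := by
  have hI : ∀ a b, IntervalIntegrable f MeasureTheory.volume a b :=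
    fun a b => hc.intervalIntegrable a b
  have habs : ∫ u in y..v, f u = ∫ u in |y|..v, f u := by
    rcases abs_cases y with ⟨h, -⟩ | ⟨h, -⟩
    · rw [h]
    · rw [h, ← intervalIntegral.integral_add_adjacent_intervals (hI y (-y)) (hI (-y) v)]
      have h1 : ∫ u in y..(-y), f u = -∫ u in y..(-y), f u := by
        conv_lhs => rw [← neg_neg y, neg_neg (-y), ← intervalIntegral.integral_comp_neg]
        simp only [hodd, intervalIntegral.integral_neg]
      linarith
  -- on an ordered subinterval of `[0, A]`
  have hkey : ∀ r s, 0 ≤ r → r ≤ s → s ≤ A →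
      -(γ * (s - r)) ≤ ∫ u in r..s, f u ∧ ∫ u in r..s, f u ≤ 0 := by
    intro r s hr hrs hs
    have h1 := intervalIntegral.integral_mono_on hrs
      (continuous_const.intervalIntegrable (μ := MeasureTheory.volume) r s) (hI r s)
      fun u hu => (hf u ⟨hr.trans hu.1, hu.2.trans hs⟩).1
    have h2 := intervalIntegral.integral_mono_on hrs (hI r s)
      (continuous_const.intervalIntegrable (μ := MeasureTheory.volume) r s)
      fun u hu => (hf u ⟨hr.trans hu.1, hu.2.trans hs⟩).2
    simp only [intervalIntegral.integral_const, smul_eq_mul] at h1 h2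
    exact ⟨by linarith, by linarith⟩
  rw [habs]
  have h0 := abs_nonneg y
  rcases le_total |y| v with h | h
  · obtain ⟨h1, h2⟩ := hkey |y| v h0 h hvA
    exact ⟨by nlinarith, by nlinarith⟩
  · obtain ⟨h1, h2⟩ := hkey v |y| hv h hy
    rw [intervalIntegral.integral_symm]
    exact ⟨by nlinarith, by nlinarith⟩

/-- The solution with `x (t) = 2a - δ t` on `[0, 1]` satisfies `x (h + t) = -x (t)` for `t ≥ 0`
and some `h > 2`, and has a single zero in `[0, h]`. -/
lemma exists_long_half_period {f x : ℝ → ℝ} {a c δ γ : ℝ}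
    (hc : 0 < c) (hδ : 0 < δ) (hγ : 0 < γ)
    (hcδ : c < δ) (hγa : 4 * a ≤ γ) (hiii : δ + (c / δ) * γ ≤ a)
    (hcont : Continuous f) (hneg : ∀ x : ℝ, x ≠ 0 → x * f x < 0)
    (hodd : ∀ x : ℝ, f (-x) = -f x) (hbd : ∀ x ∈ Icc (0 : ℝ) (2 * a), |f x| ≤ γ)
    (hmid : ∀ x ∈ Icc a (2 * a - c), f x = -γ) (hfar : ∀ x ∈ Icc (2 * a) γ, f x = -δ)
    (hxc : Continuous x) (hx0 : ∀ t, t ≤ 1 → x t = 2 * a - δ * t)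
    (hxd : ∀ t, 1 < t → HasDerivAt x (f (x (t - 1))) t) :
    ∃ h z : ℝ, 2 < h ∧ (∀ t, 0 ≤ t → x (t + h) = -x t) ∧ 0 ≤ z ∧ x z = 0 ∧
      ∀ t, 0 ≤ t → t ≤ h → x t = 0 → t = z := by
  have hfx : Continuous fun u => f (x (u - 1)) := by fun_prop
  have hI : ∀ s t, IntervalIntegrable (fun u => f (x (u - 1))) MeasureTheory.volume s t :=
    fun s t => hfx.intervalIntegrable s t
  have hint : ∀ s t, 1 ≤ s → s ≤ t → x t = x s + ∫ u in s..t, f (x (u - 1)) := by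
    intro s t hs hst
    rw [intervalIntegral.integral_eq_sub_of_hasDerivAt_of_le hst hxc.continuousOn
      (fun u hu => hxd u (by linarith [hu.1])) (hI s t)]
    ring
  have hlin : ∀ s t K, 1 ≤ s → s ≤ t → (∀ u ∈ Icc s t, f (x (u - 1)) = K) →
      x t = x s + K * (t - s) := by
    intro s t K hs hst hK
    rw [hint s t hs hst, intervalIntegral.integral_congr (g := fun _ => K)
      fun u hu => hK u (by rwa [uIcc_of_le hst] at hu), intervalIntegral.integral_const,
      smul_eq_mul]
    ring
  have hf0 : f 0 = 0 := by
    have := hodd 0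
    rw [neg_zero] at this
    linarith
  have hfneg : ∀ y ∈ Icc (0 : ℝ) (2 * a), -γ ≤ f y ∧ f y ≤ 0 := by
    intro y hy
    refine ⟨(abs_le.mp (hbd y hy)).1, ?_⟩
    rcases hy.1.eq_or_lt with h | h
    · rw [← h, hf0]
    · have := hneg y h.ne'
      nlinarith
  have hfar' : ∀ y, -γ ≤ y → y ≤ -(2 * a) → f y = δ := by
    intro y h1 h2
    have h3 := hfar (-y) ⟨by linarith, by linarith⟩
    rw [hodd] at h3
    linarith
  set b := c / δ with hb
  have hb0 : 0 < b := div_pos hc hδ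
  have hb1 : b < 1 := (div_lt_one hδ).mpr hcδ
  have hδb : δ * b = c := by rw [hb]; field_simp
  have hbγ : 0 < b * γ := mul_pos hb0 hγ
  have hx1 : x 1 = 2 * a - δ := by rw [hx0 1 le_rfl]; ring
  -- descent with slope of absolute value at most `γ` on `[1, 1 + b]`
  have hB : ∀ t ∈ Icc 1 (1 + b), a ≤ x t ∧ x t ≤ 2 * a - δ := by
    intro t ht
    have hu : ∀ u ∈ Icc 1 t, -γ ≤ f (x (u - 1)) ∧ f (x (u - 1)) ≤ 0 := by
      intro u hu
      refine hfneg _ ?_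
      have h2 : u ≤ 1 + b := hu.2.trans ht.2
      rw [hx0 (u - 1) (by linarith)]
      exact ⟨by nlinarith [hu.1], by nlinarith [hu.1]⟩
    have h1 := intervalIntegral.integral_mono_on ht.1
      (continuous_const.intervalIntegrable (μ := MeasureTheory.volume) 1 t) (hI 1 t)
      fun u h => (hu u h).1
    have h2 := intervalIntegral.integral_mono_on ht.1 (hI 1 t)
      (continuous_const.intervalIntegrable (μ := MeasureTheory.volume) 1 t)
      fun u h => (hu u h).2
    simp only [intervalIntegral.integral_const, smul_eq_mul] at h1 h2
    rw [hint 1 t le_rfl ht.1, hx1]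
    have h3 : (t - 1) * γ ≤ b * γ := mul_le_mul_of_nonneg_right (by linarith [ht.2]) hγ.le
    exact ⟨by linarith, by linarith⟩
  have hC : ∀ t ∈ Icc b (1 + b), a ≤ x t ∧ x t ≤ 2 * a - c := by
    intro t ht
    rcases le_total t 1 with h | h
    · rw [hx0 t h]
      exact ⟨by nlinarith, by nlinarith [ht.1]⟩
    · obtain ⟨h1, h2⟩ := hB t ⟨h, ht.2⟩
      exact ⟨h1, by linarith⟩
  set v := x (1 + b) with hv
  obtain ⟨hva, hvδ⟩ : a ≤ v ∧ v ≤ 2 * a - δ := hB (1 + b) ⟨by linarith, le_rfl⟩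
  -- fast descent through zero on `[1 + b, 2 + b]`
  have hD : ∀ t ∈ Icc (1 + b) (2 + b), x t = v - γ * (t - 1 - b) := by
    intro t ht
    rw [hlin (1 + b) t (-γ) (by linarith) ht.1 fun u hu => hmid _
      (hC (u - 1) ⟨by linarith [hu.1], by linarith [hu.2, ht.2]⟩)]
    ring
  set u₀ := (v + 2 * a) / γ with hu₀
  have hγu₀ : γ * u₀ = v + 2 * a := by rw [hu₀]; field_simp
  have hu₀0 : 0 < u₀ := div_pos (by linarith) hγ
  have hu₀1 : u₀ < 1 := (div_lt_one hγ).mpr (by linarith)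
  have hE : ∀ t ∈ Icc (2 + b) (2 + b + u₀), -γ ≤ x t ∧ x t ≤ -(2 * a) := by
    intro t ht
    have h1 : x t = v - γ + γ⁻¹ * ∫ y in (v - γ * (t - 2 - b))..v, f y := by
      rw [hint (2 + b) t (by linarith) ht.1, hD (2 + b) ⟨by linarith, le_rfl⟩]
      have h2 : ∫ u in (2 + b)..t, f (x (u - 1)) =
          ∫ u in (2 + b)..t, f ((v + γ * (2 + b)) - γ * u) := by
        refine intervalIntegral.integral_congr fun u hu => ?_
        rw [uIcc_of_le ht.1] at hu
        rw [hD (u - 1) ⟨by linarith [hu.1], by linarith [hu.2, ht.2]⟩]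
        congr 1
        ring
      rw [h2, intervalIntegral.integral_comp_sub_mul _ hγ.ne', smul_eq_mul]
      congr 1
      · ring
      · congr 2 <;> ring
    have h3 : γ * (t - 2 - b) ≤ v + 2 * a := by
      rw [← hγu₀]
      exact mul_le_mul_of_nonneg_left (by linarith [ht.2]) hγ.le
    have h4 : 0 ≤ γ * (t - 2 - b) := mul_nonneg hγ.le (by linarith [ht.1])
    obtain ⟨h5, h6⟩ := integral_bounds (y := v - γ * (t - 2 - b)) (v := v) hcont hodd hfneg
      hγ.le (by linarith) (by linarith) (abs_le.mpr ⟨by linarith, by linarith⟩)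
    have hγi : 0 ≤ γ⁻¹ := (inv_pos.mpr hγ).le
    have h7 := mul_le_mul_of_nonneg_left h5 hγi
    have h8 := mul_le_mul_of_nonneg_left h6 hγi
    rw [inv_mul_cancel_left₀ hγ.ne'] at h8
    rw [mul_neg, inv_mul_cancel_left₀ hγ.ne'] at h7
    rw [h1]
    exact ⟨by linarith, by linarith⟩
  set τ := 2 + b + u₀ with hτ
  obtain ⟨hτ1, hτ2⟩ := hE τ ⟨by linarith, le_rfl⟩
  -- `h` is the time at which `x` climbs back to `-2a`
  set h := τ + (-(2 * a) - x τ) / δ with hh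
  have hδh : δ * (h - τ) = -(2 * a) - x τ := by rw [hh]; field_simp; ring
  have hτh : τ ≤ h := by
    have : 0 ≤ (-(2 * a) - x τ) / δ := div_nonneg (by linarith) hδ.le
    linarith
  have hpast : ∀ t ∈ Icc (τ - 1) τ, -γ ≤ x t ∧ x t ≤ -(2 * a) := by
    intro t ht
    rcases le_total t (2 + b) with h1 | h1
    · rw [hD t ⟨by linarith [ht.1], h1⟩]
      have h2 : γ * u₀ ≤ γ * (t - 1 - b) := mul_le_mul_of_nonneg_left (by linarith [ht.1]) hγ.le
      have h3 : γ * (t - 1 - b) ≤ γ * 1 := mul_le_mul_of_nonneg_left (by linarith) hγ.le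
      exact ⟨by linarith, by linarith⟩
    · exact hE t ⟨h1, ht.2⟩
  have hF : ∀ n : ℕ, ∀ t ∈ Icc τ (h + 1), t ≤ τ + n → x t = x τ + δ * (t - τ) := by
    intro n
    induction n with
    | zero =>
      intro t ht htn
      have : t = τ := le_antisymm (by simpa using htn) ht.1
      rw [this]
      ring
    | succ n ih =>
      intro t ht htn
      push_cast at htn
      refine hlin τ t δ (by linarith) ht.1 fun w hw => ?_
      rcases le_total (w - 1) τ with h1 | h1
      · obtain ⟨h2, h3⟩ := hpast (w - 1) ⟨by linarith [hw.1], h1⟩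
        exact hfar' _ h2 h3
      · have h2 := ih (w - 1) ⟨h1, by linarith [hw.2, ht.2]⟩ (by linarith [hw.2])
        have h3 : δ * (w - 1 - τ) ≤ δ * (h - τ) :=
          mul_le_mul_of_nonneg_left (by linarith [hw.2, ht.2]) hδ.le
        have h4 : 0 ≤ δ * (w - 1 - τ) := mul_nonneg hδ.le (by linarith)
        exact hfar' _ (by linarith) (by linarith)
  have hG : ∀ t ∈ Icc τ (h + 1), x t = -(2 * a) + δ * (t - h) := by
    intro t ht
    obtain ⟨n, hn⟩ := exists_nat_ge (t - τ)
    rw [hF n t ht (by linarith)]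
    linarith
  have hanti : ∀ n : ℕ, ∀ t : ℝ, 0 ≤ t → t ≤ n + 1 → x (t + h) = -x t := by
    intro n
    induction n with
    | zero =>
      intro t ht htn
      have ht1 : t ≤ 1 := by simpa using htn
      rw [hG (t + h) ⟨by linarith, by linarith⟩, hx0 t ht1]
      ring
    | succ n ih =>
      intro t ht htn
      push_cast at htn
      have hn0 : (0 : ℝ) ≤ n := n.cast_nonneg
      rcases le_total t 1 with h1 | h1
      · exact ih t ht (by linarith)
      · rw [hint (1 + h) (t + h) (by linarith) (by linarith), hint 1 t le_rfl h1,
          ih 1 zero_le_one (by linarith), neg_add, ← intervalIntegral.integral_neg,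
          ← intervalIntegral.integral_comp_add_right (fun u => f (x (u - 1))) h]
        congr 1
        refine intervalIntegral.integral_congr fun u hu => ?_
        rw [uIcc_of_le h1] at hu
        rw [show u + h - 1 = u - 1 + h by ring,
          ih (u - 1) (by linarith [hu.1]) (by linarith [hu.2]), hodd]
  have hγz : γ * (v / γ) = v := by field_simp
  have hz0 : 0 < v / γ := div_pos (by linarith) hγ
  have hz1 : v / γ < 1 := (div_lt_one hγ).mpr (by linarith)
  refine ⟨h, 1 + b + v / γ, by linarith, ?_, by linarith, ?_, ?_⟩
  · intro t ht
    obtain ⟨n, hn⟩ := exists_nat_ge t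
    exact hanti n t ht (by linarith)
  · rw [hD _ ⟨by linarith, by linarith⟩]
    linarith
  · intro t ht hth hxt
    rcases le_total t b with h1 | h1
    · rw [hx0 t (by linarith)] at hxt
      have : δ * t ≤ δ * b := mul_le_mul_of_nonneg_left h1 hδ.le
      linarith
    rcases le_total t (1 + b) with h2 | h2
    · linarith [(hC t ⟨h1, h2⟩).1]
    rcases le_total t (2 + b) with h3 | h3
    · rw [hD t ⟨h2, h3⟩] at hxt
      have h4 : γ * (t - 1 - b) = γ * (v / γ) := by linarith
      have h5 := mul_left_cancel₀ hγ.ne' h4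
      linarith
    rcases le_total t τ with h4 | h4
    · linarith [(hE t ⟨h3, h4⟩).2]
    · rw [hG t ⟨h4, by linarith⟩] at hxt
      have : δ * (t - h) ≤ 0 := mul_nonpos_of_nonneg_of_nonpos hδ.le (by linarith)
      linarith

theorem statement_14 (f : ℝ → ℝ) (a c δ γ : ℝ)
    (ha : 0 < a) (hc : 0 < c) (hδ : 0 < δ) (hγ : 0 < γ)
    (hi : c < min a δ) (hii : 4 * a ≤ γ ∧ δ < γ) (hiii : δ + (c / δ) * γ ≤ a)
    (hH : HypH f) (hH'' : HypH'' f a c δ γ)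
    (hlip : LocallyLipschitz f)
    (hconst : ∃ ρ : ℝ, 0 < ρ ∧ ∀ x : ℝ, ρ ≤ x → f x = f ρ)
    (hunstable : deriv f 0 < -(Real.pi / 2)) :
    (∃ (p : ℝ → ℝ) (T : ℝ), IsSOP f p ∧ MinPeriod p T ∧ 4 < T) ∧
      ∃ x : ℝ → ℝ, IsKY f x := by
  obtain ⟨hcont, hneg, hdiff, -⟩ := hH
  obtain ⟨hodd, hbd, hmid, hfar⟩ := hH''
  refine ⟨?_, exists_kaplan_yorke hcont hneg hdiff.self_of_nhds hunstable hodd hconst⟩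
  obtain ⟨x, hxc, hx0, hxd⟩ := exists_forward_solution hcont
    (by fun_prop : Continuous fun t : ℝ => 2 * a - δ * t)
  obtain ⟨h, z, hh, hanti, hz0, hz, hzu⟩ := exists_long_half_period hc hδ hγ
    (hi.trans_le (min_le_right _ _)) hii.1 hiii hcont hneg hodd hbd hmid hfar hxc hx0 hxd
  have hhpos : 0 < h := by linarith
  obtain ⟨p, hpd, hpanti, hpx⟩ := exists_antiperiodic_extension hhpos hodd hxd hanti
  have hzero : ∀ t, p t = 0 → ∃ k : ℤ, t = z + k * h := by
    intro t ht
    have hper : Function.Periodic (fun t => |p t|) h := fun t => by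
      simp only [hpanti, abs_neg]
    have h1 : |p (t - ⌊t / h⌋ * h)| = |p t| := hper.sub_int_mul_eq ⌊t / h⌋
    rw [ht, abs_zero, abs_eq_zero] at h1
    have h2 : 0 ≤ t - ⌊t / h⌋ * h := by
      have := (le_div_iff₀ hhpos).mp (Int.floor_le (t / h))
      linarith
    have h3 : t - ⌊t / h⌋ * h ≤ h := by
      have := (div_lt_iff₀ hhpos).mp (Int.lt_floor_add_one (t / h))
      linarith
    rw [hpx _ h2] at h1
    exact ⟨⌊t / h⌋, by linarith [hzu _ h2 h3 h1]⟩
  have hne : ∃ t, p t ≠ 0 := by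
    refine ⟨0, ?_⟩
    rw [hpx 0 le_rfl, hx0 0 zero_le_one]
    simpa using ha.ne'
  obtain ⟨h1, h2⟩ := sop_of_antiperiodic (by linarith) hpd hpanti (by rw [hpx z hz0, hz]) hzero hne
  exact ⟨p, 2 * h, h1, h2, by linarith⟩
end

section
/- Let f : ℝ → ℝ be continuously differentiable, odd, satisfy the negative feedback condition x·f(x) < 0 for all x ≠ 0 with f'(0) < 0, and be constant on [ρ, ∞) for some ρ > 0. Then there exists a continuous function τ : (0,∞) → (0,∞) such that for every u₀ > 0, the unique solution (u, v) : [0,∞) → ℝ² of the planar system u' = f(v), v' = -f(u) with u(0) = u₀, v(0) = 0 satisfies u(t) > 0 for all t ∈ [0, τ(u₀)) and u(τ(u₀)) = 0; moreover τ(u) → -π/(2 f'(0)) as u → 0⁺ and τ(u) → ∞ as u → ∞. -/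
/-!
The system is Hamiltonian: with `F` the primitive of `-f` vanishing at `0`, the quantity
`F u + F v` is conserved.  As `F` is even and strictly increasing in `|x|`, each ray of angle `θ`
meets the level set `F u + F v = F u₀` in exactly one point, at distance `R u₀ θ` from the origin
(`exists_radius`), and `R` is jointly continuous (`continuousAt_radius`).  Along a solution the polar
angle satisfies `θ' = (q u + q v) / (u² + v²)` with `q x = -x f x`, which is a positive function
of `u₀` and `θ` alone.  Its reciprocal is `slowness f R u₀ θ`, so the time to reach angle `θ` is the
integral of the slowness from `0` to `θ` (`time_eq_integral`), and
`τ u₀ = ∫ θ in 0..π/2, slowness f R u₀ θ`.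

Continuity of `τ` is continuity of a parametric integral.  On the level set `|u|, |v| ≤ u₀`,
so for small `u₀` the slowness is uniformly close to `1 / (-f'(0))`.  Since `f` is bounded by some
`C`, the slowness is at least `R / (2 C)`, and `R → ∞` uniformly in `θ` as `u₀ → ∞`.
-/

open Set Filter

/-- The primitive of `-f` vanishing at `0` is a strictly increasing function of `|x|`: it is even because
`f` is odd, and negative feedback makes `-f` positive on `(0, ∞)`. -/
lemma exists_potential (f : ℝ → ℝ) (hf : Continuous f)
    (hodd : ∀ x : ℝ, f (-x) = -f x) (hfb : ∀ x : ℝ, x ≠ 0 → x * f x < 0) :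
    ∃ F : ℝ → ℝ, F 0 = 0 ∧ (∀ x, HasDerivAt F (-f x) x) ∧
      ∀ x y, |x| < |y| → F x < F y := by
  have hd : ∀ x, HasDerivAt (fun x => ∫ s in (0 : ℝ)..x, -f s) (-f x) x := fun x =>
    intervalIntegral.integral_hasDerivAt_right (hf.neg.intervalIntegrable _ _)
      hf.neg.stronglyMeasurable.stronglyMeasurableAtFilter hf.neg.continuousAt
  refine ⟨fun x => ∫ s in (0 : ℝ)..x, -f s, by simp, hd, ?_⟩
  set F : ℝ → ℝ := fun x => ∫ s in (0 : ℝ)..x, -f s with hF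
  have heven : ∀ x, F (-x) = F x := by
    intro x
    have h := intervalIntegral.integral_comp_neg (a := 0) (b := x) (fun s => -f s)
    simp only [neg_zero, hodd, neg_neg] at h
    simp only [hF]
    rw [intervalIntegral.integral_symm, ← h, intervalIntegral.integral_neg]
  have habs : ∀ x, F |x| = F x := by
    intro x
    rcases abs_choice x with h | h <;> rw [h]
    exact heven x
  have hmono : StrictMonoOn F (Ici 0) := by
    apply strictMonoOn_of_deriv_pos (convex_Ici 0)
    · exact fun x _ => (hd x).continuousAt.continuousWithinAt
    · intro x hx
      rw [interior_Ici] at hx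
      have hx : 0 < x := hx
      rw [(hd x).deriv]
      have := hfb x hx.ne'
      nlinarith
  intro x y h
  rw [← habs x, ← habs y]
  exact hmono (abs_nonneg x) (abs_nonneg y) h

/-- The energy is strictly increasing along rays. -/
lemma energy_strictMono {F : ℝ → ℝ} (hF : ∀ x y, |x| < |y| → F x < F y)
    (hFle : ∀ x y, |x| ≤ |y| → F x ≤ F y) (θ : ℝ) {r s : ℝ} (hr : 0 ≤ r) (hrs : r < s) :
    F (r * Real.cos θ) + F (r * Real.sin θ) < F (s * Real.cos θ) + F (s * Real.sin θ) := by
  have hle : ∀ c : ℝ, |r * c| ≤ |s * c| := by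
    intro c
    rw [abs_mul, abs_mul, abs_of_nonneg hr, abs_of_pos (hr.trans_lt hrs)]
    gcongr
  by_cases hc : Real.cos θ = 0
  · have hs : Real.sin θ ≠ 0 := by
      intro h
      have := Real.sin_sq_add_cos_sq θ
      simp [h, hc] at this
    refine add_lt_add_of_le_of_lt (hFle _ _ (hle _)) (hF _ _ ?_)
    rw [abs_mul, abs_mul, abs_of_nonneg hr, abs_of_pos (hr.trans_lt hrs)]
    have := abs_pos.2 hs
    gcongr
  · refine add_lt_add_of_lt_of_le (hF _ _ ?_) (hFle _ _ (hle _))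
    rw [abs_mul, abs_mul, abs_of_nonneg hr, abs_of_pos (hr.trans_lt hrs)]
    have := abs_pos.2 hc
    gcongr

/-- The weak form of monotonicity in `|x|`; it contains the evenness of `F`. -/
lemma le_of_lt_abs {F : ℝ → ℝ} (hc : Continuous F) (hF : ∀ x y, |x| < |y| → F x < F y)
    (x y : ℝ) (h : |x| ≤ |y|) : F x ≤ F y := by
  -- `F x ≤ F y'` for every `y'` beyond `y` on the same side of `0`; let `y' → y`.
  have key : ∀ n : ℕ, F x ≤ F (y + (if 0 ≤ y then 1 else -1) * (1 / ((n : ℝ) + 1))) := by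
    intro n
    apply le_of_lt
    apply hF
    have hn : 0 < 1 / ((n : ℝ) + 1) := by positivity
    split_ifs with hy
    · rw [abs_of_nonneg hy] at h
      exact h.trans_lt (lt_of_lt_of_le (by linarith) (le_abs_self _))
    · push Not at hy
      rw [abs_of_neg hy] at h
      exact h.trans_lt (lt_of_lt_of_le (by linarith) (neg_le_abs _))
  have hlim : Tendsto (fun n : ℕ => F (y + (if 0 ≤ y then 1 else -1) * (1 / ((n : ℝ) + 1))))
      atTop (nhds (F y)) := by
    have h1 := (tendsto_one_div_add_atTop_nhds_zero_nat (𝕜 := ℝ)).const_mul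
      (if 0 ≤ y then (1 : ℝ) else -1)
    have h2 := h1.const_add y
    rw [mul_zero, add_zero] at h2
    exact (hc.tendsto y).comp h2
  exact ge_of_tendsto' hlim key

/-- `R u₀ θ` is the radius of the level curve of the energy through `(u₀, 0)` at angle `θ`. -/
def IsRadius (F : ℝ → ℝ) (R : ℝ → ℝ → ℝ) : Prop :=
  ∀ u₀, 0 < u₀ → ∀ θ, 0 < R u₀ θ ∧
    F (R u₀ θ * Real.cos θ) + F (R u₀ θ * Real.sin θ) = F u₀

lemma exists_radius_s15 {F : ℝ → ℝ} (hc : Continuous F) (h0 : F 0 = 0)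
    (hF : ∀ x y, |x| < |y| → F x < F y) : ∃ R, IsRadius F R := by
  have hle := le_of_lt_abs hc hF
  have hnn : ∀ x, 0 ≤ F x := fun x => h0 ▸ hle 0 x (by simp)
  have key : ∀ u₀ θ : ℝ, ∃ r, 0 < u₀ → 0 < r ∧
      F (r * Real.cos θ) + F (r * Real.sin θ) = F u₀ := by
    intro u₀ θ
    by_cases hu : 0 < u₀
    swap
    · exact ⟨0, fun h => absurd h hu⟩
    have hpos : 0 < F u₀ := h0 ▸ hF 0 u₀ (by simpa using hu.ne')
    have hcont : ContinuousOn (fun r => F (r * Real.cos θ) + F (r * Real.sin θ))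
        (Icc 0 (2 * u₀)) := by fun_prop
    -- One of `|cos θ|`, `|sin θ|` is at least `1 / 2`, so the energy at radius `2 u₀` is enough.
    have hbig : F u₀ ≤ F (2 * u₀ * Real.cos θ) + F (2 * u₀ * Real.sin θ) := by
      have hcs := Real.sin_sq_add_cos_sq θ
      have hor : 1 / 2 ≤ |Real.cos θ| ∨ 1 / 2 ≤ |Real.sin θ| := by
        by_contra! h
        have h1 := sq_abs (Real.cos θ)
        have h2 := sq_abs (Real.sin θ)
        nlinarith [abs_nonneg (Real.cos θ), abs_nonneg (Real.sin θ)]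
      rcases hor with h | h
      · have := hle u₀ (2 * u₀ * Real.cos θ) (by
          rw [abs_mul, abs_of_pos hu, abs_of_pos (by linarith : 0 < 2 * u₀)]; nlinarith)
        linarith [hnn (2 * u₀ * Real.sin θ)]
      · have := hle u₀ (2 * u₀ * Real.sin θ) (by
          rw [abs_mul, abs_of_pos hu, abs_of_pos (by linarith : 0 < 2 * u₀)]; nlinarith)
        linarith [hnn (2 * u₀ * Real.cos θ)]
    obtain ⟨r, hr, hre⟩ := intermediate_value_Icc (by linarith : (0 : ℝ) ≤ 2 * u₀) hcont
      (show F u₀ ∈ Icc _ _ from ⟨by simp [h0, hpos.le], hbig⟩)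
    refine ⟨r, fun _ => ⟨lt_of_le_of_ne hr.1 ?_, hre⟩⟩
    rintro rfl
    simp [h0] at hre
    exact hpos.ne hre
  choose R hR using key
  exact ⟨R, fun u₀ hu θ => hR u₀ θ hu⟩

lemma continuousAt_radius {F : ℝ → ℝ} (hc : Continuous F)
    (hF : ∀ x y, |x| < |y| → F x < F y) {R : ℝ → ℝ → ℝ} (hR : IsRadius F R)
    {p : ℝ × ℝ} (hp : 0 < p.1) : ContinuousAt (fun q : ℝ × ℝ => R q.1 q.2) p := by
  have hle := le_of_lt_abs hc hF
  have hpos : ∀ᶠ q : ℝ × ℝ in nhds p, 0 < q.1 :=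
    continuous_fst.continuousAt.eventually (lt_mem_nhds hp)
  obtain ⟨hr, hre⟩ := hR p.1 hp p.2
  -- At fixed `r`, comparing the energy at radius `r` with `F u₀` is an open condition on `(u₀, θ)`.
  have hcont : ∀ r : ℝ, Continuous (fun q : ℝ × ℝ =>
      F (r * Real.cos q.2) + F (r * Real.sin q.2)) := by intro r; fun_prop
  have hcont' : Continuous (fun q : ℝ × ℝ => F q.1) := by fun_prop
  rw [ContinuousAt, tendsto_order]
  constructor
  · intro a ha
    rcases lt_or_ge a 0 with ha0 | ha0
    · filter_upwards [hpos] with q hq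
      exact ha0.trans (hR q.1 hq q.2).1
    have h1 : F (a * Real.cos p.2) + F (a * Real.sin p.2) < F p.1 :=
      hre ▸ energy_strictMono hF hle p.2 ha0 ha
    filter_upwards [hpos, (hcont a).continuousAt.eventually_lt hcont'.continuousAt h1] with q hq h
    by_contra! hcon
    obtain ⟨h2, h3⟩ := hR q.1 hq q.2
    rcases hcon.eq_or_lt with h4 | h4
    · rw [h4] at h3; linarith
    · have := energy_strictMono hF hle q.2 h2.le h4
      linarith
  · intro b hb
    have h1 : F p.1 < F (b * Real.cos p.2) + F (b * Real.sin p.2) :=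
      hre ▸ energy_strictMono hF hle p.2 hr.le hb
    filter_upwards [hpos, hcont'.continuousAt.eventually_lt (hcont b).continuousAt h1] with q hq h
    by_contra! hcon
    obtain ⟨h2, h3⟩ := hR q.1 hq q.2
    rcases hcon.eq_or_lt with h4 | h4
    · rw [← h4] at h3; linarith
    · have := energy_strictMono hF hle q.2 (hr.trans hb).le h4
      linarith

/-- The reciprocal of the angular velocity at angle `θ` on the orbit through `(u₀, 0)`. -/
noncomputable def slowness (f : ℝ → ℝ) (R : ℝ → ℝ → ℝ) (u₀ θ : ℝ) : ℝ :=
  R u₀ θ ^ 2 / (-(R u₀ θ * Real.cos θ * f (R u₀ θ * Real.cos θ))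
    - R u₀ θ * Real.sin θ * f (R u₀ θ * Real.sin θ))

lemma speed_pos {f : ℝ → ℝ} (hfb : ∀ x : ℝ, x ≠ 0 → x * f x < 0) {x y : ℝ}
    (h : x ≠ 0 ∨ y ≠ 0) : 0 < -(x * f x) - y * f y := by
  have hnn : ∀ x, x * f x ≤ 0 := fun x => by
    by_cases hx : x = 0
    · simp [hx]
    · exact (hfb x hx).le
  rcases h with h | h
  · linarith [hfb x h, hnn y]
  · linarith [hfb y h, hnn x]

lemma polar_ne_zero {r : ℝ} (hr : 0 < r) (θ : ℝ) : r * Real.cos θ ≠ 0 ∨ r * Real.sin θ ≠ 0 := by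
  by_contra! h
  have h1 : Real.cos θ = 0 := by simpa [hr.ne'] using h.1
  have h2 : Real.sin θ = 0 := by simpa [hr.ne'] using h.2
  have := Real.sin_sq_add_cos_sq θ
  simp [h1, h2] at this

lemma slowness_pos {f F : ℝ → ℝ} {R : ℝ → ℝ → ℝ} (hfb : ∀ x : ℝ, x ≠ 0 → x * f x < 0)
    (hR : IsRadius F R) {u₀ : ℝ} (hu : 0 < u₀) (θ : ℝ) : 0 < slowness f R u₀ θ := by
  have hr := (hR u₀ hu θ).1
  exact div_pos (by positivity) (speed_pos hfb (polar_ne_zero hr θ))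

lemma continuous_slowness {f F : ℝ → ℝ} {R : ℝ → ℝ → ℝ} (hf : Continuous f)
    (hfb : ∀ x : ℝ, x ≠ 0 → x * f x < 0) (hc : Continuous F)
    (hF : ∀ x y, |x| < |y| → F x < F y) (hR : IsRadius F R) :
    Continuous (fun p : Ioi (0 : ℝ) × ℝ => slowness f R p.1 p.2) := by
  have hRc : Continuous (fun p : Ioi (0 : ℝ) × ℝ => R p.1 p.2) := by
    rw [continuous_iff_continuousAt]
    intro p
    have h := continuousAt_radius hc hF hR (p := ((p.1 : ℝ), p.2)) p.1.2
    have hg : ContinuousAt (fun p : Ioi (0 : ℝ) × ℝ => ((p.1 : ℝ), p.2)) p := by fun_prop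
    exact ContinuousAt.comp (g := fun q : ℝ × ℝ => R q.1 q.2)
      (f := fun p : Ioi (0 : ℝ) × ℝ => ((p.1 : ℝ), p.2)) h hg
  unfold slowness
  have hcos : Continuous (fun p : Ioi (0 : ℝ) × ℝ => R p.1 p.2 * Real.cos p.2) :=
    hRc.mul (Real.continuous_cos.comp continuous_snd)
  have hsin : Continuous (fun p : Ioi (0 : ℝ) × ℝ => R p.1 p.2 * Real.sin p.2) :=
    hRc.mul (Real.continuous_sin.comp continuous_snd)
  refine Continuous.div (hRc.pow 2)
    ((hcos.mul (hf.comp hcos)).neg.sub (hsin.mul (hf.comp hsin))) fun p => ?_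
  exact (speed_pos hfb (polar_ne_zero (hR p.1 p.1.2 p.2).1 p.2)).ne'

/-- A solution whose first component stays positive before time `t₁` reaches its polar angle at
`t₁` after the time predicted by integrating the slowness. -/
lemma time_eq_integral {f F : ℝ → ℝ} {R : ℝ → ℝ → ℝ} (hf : Continuous f)
    (hfb : ∀ x : ℝ, x ≠ 0 → x * f x < 0) (hFd : ∀ x, HasDerivAt F (-f x) x) (h0 : F 0 = 0)
    (hF : ∀ x y, |x| < |y| → F x < F y) (hR : IsRadius F R) {u₀ : ℝ} (hu₀ : 0 < u₀)
    {u v : ℝ → ℝ} (hu0 : u 0 = u₀) (hv0 : v 0 = 0)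
    (hu : ∀ t : ℝ, 0 ≤ t → HasDerivAt u (f (v t)) t)
    (hv : ∀ t : ℝ, 0 ≤ t → HasDerivAt v (-f (u t)) t)
    {t₁ : ℝ} (ht₁ : 0 < t₁) (hpos : ∀ t ∈ Ico 0 t₁, 0 < u t) :
    0 < v t₁ ∧ ∫ θ in (0 : ℝ)..(Complex.arg ⟨u t₁, v t₁⟩), slowness f R u₀ θ = t₁ := by
  have hc : Continuous F := continuous_iff_continuousAt.2 fun x => (hFd x).continuousAt
  have hle := le_of_lt_abs hc hF
  have hvmono : StrictMonoOn v (Icc 0 t₁) := by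
    apply strictMonoOn_of_deriv_pos (convex_Icc 0 t₁)
    · exact fun x hx => (hv x hx.1).continuousAt.continuousWithinAt
    · intro x hx
      rw [interior_Icc] at hx
      rw [(hv x hx.1.le).deriv]
      have hux := hpos x ⟨hx.1.le, hx.2⟩
      have := hfb (u x) hux.ne'
      nlinarith
  have hvpos : ∀ t ∈ Ioc 0 t₁, 0 < v t := fun t ht =>
    hv0 ▸ hvmono (left_mem_Icc.2 ht₁.le) ⟨ht.1.le, ht.2⟩ ht.1
  refine ⟨hvpos t₁ ⟨ht₁, le_rfl⟩, ?_⟩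
  have henergy : ∀ t ∈ Icc 0 t₁, F (u t) + F (v t) = F u₀ := by
    have h := constant_of_has_deriv_right_zero (f := fun t => F (u t) + F (v t)) (a := 0) (b := t₁)
      (fun t ht => (((hFd _).comp t (hu t ht.1)).add
        ((hFd _).comp t (hv t ht.1))).continuousAt.continuousWithinAt)
      (fun t ht => by
        have h := ((hFd (u t)).comp t (hu t ht.1)).add ((hFd (v t)).comp t (hv t ht.1))
        have e : -f (u t) * f (v t) + -f (v t) * -f (u t) = 0 := by ring
        rw [e] at h
        exact h.hasDerivWithinAt)
    intro t ht
    rw [h t ht, hu0, hv0, h0, add_zero]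
  have hslit : ∀ t ∈ Icc 0 t₁, (⟨u t, v t⟩ : ℂ) ∈ Complex.slitPlane := by
    intro t ht
    rw [Complex.mem_slitPlane_iff]
    rcases ht.1.eq_or_lt with h | h
    · left
      exact hpos t ⟨ht.1, h ▸ ht₁⟩
    · right
      exact (hvpos t ⟨h, ht.2⟩).ne'
  set θ : ℝ → ℝ := fun t => Complex.arg ⟨u t, v t⟩ with hθ
  have hrad : ∀ t ∈ Icc 0 t₁, R u₀ (θ t) * Real.cos (θ t) = u t ∧
      R u₀ (θ t) * Real.sin (θ t) = v t ∧ R u₀ (θ t) ^ 2 = u t ^ 2 + v t ^ 2 := by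
    intro t ht
    have hz : (⟨u t, v t⟩ : ℂ) ≠ 0 := Complex.slitPlane_ne_zero (hslit t ht)
    have hn : 0 < ‖(⟨u t, v t⟩ : ℂ)‖ := norm_pos_iff.2 hz
    have h1 : ‖(⟨u t, v t⟩ : ℂ)‖ * Real.cos (θ t) = u t := Complex.norm_mul_cos_arg _
    have h2 : ‖(⟨u t, v t⟩ : ℂ)‖ * Real.sin (θ t) = v t := Complex.norm_mul_sin_arg _
    have h3 : F (‖(⟨u t, v t⟩ : ℂ)‖ * Real.cos (θ t)) +
        F (‖(⟨u t, v t⟩ : ℂ)‖ * Real.sin (θ t)) = F u₀ := by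
      rw [h1, h2]
      exact henergy t ht
    obtain ⟨h4, h5⟩ := hR u₀ hu₀ (θ t)
    have h6 : R u₀ (θ t) = ‖(⟨u t, v t⟩ : ℂ)‖ := by
      rcases lt_trichotomy (R u₀ (θ t)) ‖(⟨u t, v t⟩ : ℂ)‖ with h | h | h
      · have := energy_strictMono hF hle (θ t) h4.le h
        linarith
      · exact h
      · have := energy_strictMono hF hle (θ t) hn.le h
        linarith
    rw [h6]
    refine ⟨h1, h2, ?_⟩
    rw [Complex.sq_norm, Complex.normSq_mk]
    ring
  have hθd : ∀ t ∈ Icc 0 t₁, HasDerivAt θ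
      ((-(u t * f (u t)) - v t * f (v t)) / (u t ^ 2 + v t ^ 2)) t := by
    intro t ht
    have hz : HasDerivAt (fun t => (⟨u t, v t⟩ : ℂ)) (⟨f (v t), -f (u t)⟩ : ℂ) t := by
      have h := (hu t ht.1).ofReal_comp.add ((hv t ht.1).ofReal_comp.mul_const Complex.I)
      have e : ∀ a b : ℝ, (⟨a, b⟩ : ℂ) = (a : ℂ) + (b : ℂ) * Complex.I := fun a b =>
        Complex.mk_eq_add_mul_I a b
      simp only [e]
      exact h
    have hl := hz.clog_real (hslit t ht)
    have him := (Complex.imCLM.hasFDerivAt.comp_hasDerivAt t hl)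
    have e1 : (Complex.imCLM ∘ fun t => Complex.log (⟨u t, v t⟩ : ℂ)) = θ := by
      funext s
      simp [hθ, Complex.log_im]
    rw [e1] at him
    refine him.congr_deriv ?_
    simp only [Complex.imCLM_apply, Complex.div_im, Complex.normSq_mk]
    ring
  have hcs : Continuous (slowness f R u₀) :=
    (continuous_slowness hf hfb hc hF hR).comp
      (Continuous.prodMk (continuous_const (y := (⟨u₀, hu₀⟩ : Ioi (0 : ℝ)))) continuous_id)
  have hT : ∀ t ∈ Icc 0 t₁, HasDerivAt
      (fun t => (∫ s in (0 : ℝ)..(θ t), slowness f R u₀ s) - t) 0 t := by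
    intro t ht
    have h1 : HasDerivAt (fun x => ∫ s in (0 : ℝ)..x, slowness f R u₀ s)
        (slowness f R u₀ (θ t)) (θ t) :=
      intervalIntegral.integral_hasDerivAt_right (hcs.intervalIntegrable _ _)
        hcs.stronglyMeasurable.stronglyMeasurableAtFilter hcs.continuousAt
    refine ((h1.comp t (hθd t ht)).fun_sub (hasDerivAt_id' t)).congr_deriv ?_
    obtain ⟨e1, e2, e3⟩ := hrad t ht
    have hp := speed_pos hfb (polar_ne_zero (hR u₀ hu₀ (θ t)).1 (θ t))
    have hr := (hR u₀ hu₀ (θ t)).1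
    have hr2 : 0 < R u₀ (θ t) ^ 2 := by positivity
    rw [slowness]
    rw [e1, e2, e3] at *
    field_simp
    simp
  have hfin := constant_of_has_deriv_right_zero (a := 0) (b := t₁)
    (fun t ht => (hT t ht).continuousAt.continuousWithinAt)
    (fun t ht => (hT t ⟨ht.1, ht.2.le⟩).hasDerivWithinAt) t₁ (right_mem_Icc.2 ht₁.le)
  have hθ0 : θ 0 = 0 := by
    simp only [hθ, hu0, hv0]
    exact Complex.arg_ofReal_of_nonneg hu₀.le
  simp only [hθ0, intervalIntegral.integral_same, sub_zero] at hfin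
  linarith

/-- On the orbit through `(u₀, 0)` both coordinates are bounded by `u₀`. -/
lemma coord_le {F : ℝ → ℝ} {R : ℝ → ℝ → ℝ} (h0 : F 0 = 0) (hc : Continuous F)
    (hF : ∀ x y, |x| < |y| → F x < F y) (hR : IsRadius F R) {u₀ : ℝ} (hu₀ : 0 < u₀) (θ : ℝ) :
    |R u₀ θ * Real.cos θ| ≤ u₀ ∧ |R u₀ θ * Real.sin θ| ≤ u₀ := by
  have hle := le_of_lt_abs hc hF
  have hnn : ∀ x, 0 ≤ F x := fun x => h0 ▸ hle 0 x (by simp)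
  obtain ⟨-, h⟩ := hR u₀ hu₀ θ
  constructor
  · by_contra! hcon
    have := hF u₀ (R u₀ θ * Real.cos θ) (by rwa [abs_of_pos hu₀])
    linarith [hnn (R u₀ θ * Real.sin θ)]
  · by_contra! hcon
    have := hF u₀ (R u₀ θ * Real.sin θ) (by rwa [abs_of_pos hu₀])
    linarith [hnn (R u₀ θ * Real.cos θ)]

lemma tendsto_time_zero {f F : ℝ → ℝ} {R : ℝ → ℝ → ℝ} (hfd : DifferentiableAt ℝ f 0)
    (hf0 : f 0 = 0) (hderiv : deriv f 0 < 0) (h0 : F 0 = 0) (hc : Continuous F)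
    (hF : ∀ x y, |x| < |y| → F x < F y) (hR : IsRadius F R)
    (hI : ∀ u₀, 0 < u₀ → Continuous (slowness f R u₀)) :
    Tendsto (fun u₀ => ∫ θ in (0 : ℝ)..(Real.pi / 2), slowness f R u₀ θ)
      (nhdsWithin 0 (Ioi 0)) (nhds (-Real.pi / (2 * deriv f 0))) := by
  set a := -deriv f 0 with ha
  have hapos : 0 < a := by linarith
  rw [Metric.tendsto_nhds]
  intro ε hε
  -- `δ` controls how far the angular velocity may be from `a`.
  obtain ⟨δ, hδ, hδ'⟩ := Metric.continuousAt_iff.1 (continuousAt_inv₀ hapos.ne') (ε / 2) (by positivity)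
  have hlin := hfd.hasDerivAt.isLittleO.def (half_pos hδ)
  obtain ⟨η, hη, hη'⟩ := Metric.eventually_nhds_iff.1 hlin
  have hq : ∀ x, |x| < η → |-(x * f x) - a * x ^ 2| ≤ δ / 2 * x ^ 2 := by
    intro x hx
    have h := @hη' x (by simpa [Real.dist_eq] using hx)
    simp only [hf0, sub_zero, smul_eq_mul, Real.norm_eq_abs] at h
    have e : -(x * f x) - a * x ^ 2 = -(x * (f x - x * deriv f 0)) := by rw [ha]; ring
    rw [e, abs_neg, abs_mul]
    calc |x| * |f x - x * deriv f 0| ≤ |x| * (δ / 2 * |x|) := by gcongr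
      _ = δ / 2 * x ^ 2 := by rw [← sq_abs x]; ring
  have hev : ∀ᶠ u₀ in nhdsWithin (0 : ℝ) (Ioi 0), 0 < u₀ ∧ u₀ < η := by
    filter_upwards [Ioo_mem_nhdsGT hη] with x hx using hx
  filter_upwards [hev] with u₀ ⟨hu₀, hu⟩
  have hpt : ∀ θ, ‖slowness f R u₀ θ - a⁻¹‖ ≤ ε / 2 := by
    intro θ
    obtain ⟨h1, h2⟩ := coord_le h0 hc hF hR hu₀ θ
    have hr := (hR u₀ hu₀ θ).1
    have h3 := hq _ (h1.trans_lt hu)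
    have h4 := hq _ (h2.trans_lt hu)
    have hcs := Real.sin_sq_add_cos_sq θ
    rw [slowness]
    set r := R u₀ θ
    set S := -(r * Real.cos θ * f (r * Real.cos θ)) - r * Real.sin θ * f (r * Real.sin θ) with hS
    have hr2 : 0 < r ^ 2 := by positivity
    have h5 : |S / r ^ 2 - a| < δ := by
      have e : S / r ^ 2 - a = (S - a * r ^ 2) / r ^ 2 := by field_simp
      rw [e, abs_div, abs_of_pos hr2, div_lt_iff₀ hr2]
      have e2 : S - a * r ^ 2 =
          (-(r * Real.cos θ * f (r * Real.cos θ)) - a * (r * Real.cos θ) ^ 2) +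
          (-(r * Real.sin θ * f (r * Real.sin θ)) - a * (r * Real.sin θ) ^ 2) := by
        rw [hS]
        linear_combination (a * r ^ 2) * hcs
      have e3 : δ / 2 * (r * Real.cos θ) ^ 2 + δ / 2 * (r * Real.sin θ) ^ 2 = δ / 2 * r ^ 2 := by
        linear_combination (δ / 2 * r ^ 2) * hcs
      rw [e2]
      have := abs_add_le (-(r * Real.cos θ * f (r * Real.cos θ)) - a * (r * Real.cos θ) ^ 2)
        (-(r * Real.sin θ * f (r * Real.sin θ)) - a * (r * Real.sin θ) ^ 2)
      nlinarith
    have h6 := @hδ' (S / r ^ 2) (by rwa [Real.dist_eq])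
    rw [inv_div] at h6
    exact h6.le
  have hint := intervalIntegral.norm_integral_le_of_norm_le_const
    (a := 0) (b := Real.pi / 2) (fun θ _ => hpt θ)
  rw [intervalIntegral.integral_sub ((hI u₀ hu₀).intervalIntegrable _ _)
    (by simp)] at hint
  simp only [intervalIntegral.integral_const, sub_zero, smul_eq_mul] at hint
  have e : -Real.pi / (2 * deriv f 0) = Real.pi / 2 * a⁻¹ := by
    rw [ha]
    have := hderiv.ne
    field_simp
  rw [dist_eq_norm, e]
  refine hint.trans_lt ?_
  rw [abs_of_pos (by positivity)]
  have := Real.pi_lt_four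
  nlinarith

lemma tendsto_time_atTop {f F : ℝ → ℝ} {R : ℝ → ℝ → ℝ} (hfb : ∀ x : ℝ, x ≠ 0 → x * f x < 0)
    {C : ℝ} (hbd : ∀ x, |f x| ≤ C) (hFtop : Tendsto F atTop atTop)
    (hc : Continuous F) (hF : ∀ x y, |x| < |y| → F x < F y) (hR : IsRadius F R)
    (hI : ∀ u₀, 0 < u₀ → Continuous (slowness f R u₀)) :
    Tendsto (fun u₀ => ∫ θ in (0 : ℝ)..(Real.pi / 2), slowness f R u₀ θ) atTop atTop := by
  have hle := le_of_lt_abs hc hF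
  rw [tendsto_atTop]
  intro M
  set N := max M 0 with hN
  filter_upwards [hFtop.eventually_gt_atTop (2 * F (2 * C * N)), eventually_gt_atTop 0]
    with u₀ hu hu₀
  have hpt : ∀ θ, N ≤ slowness f R u₀ θ := by
    intro θ
    obtain ⟨hr, hre⟩ := hR u₀ hu₀ θ
    have hp := speed_pos hfb (polar_ne_zero hr θ)
    have hcos : |R u₀ θ * Real.cos θ| ≤ |R u₀ θ| := by
      rw [abs_mul]
      exact mul_le_of_le_one_right (abs_nonneg _) (Real.abs_cos_le_one θ)
    have hsin : |R u₀ θ * Real.sin θ| ≤ |R u₀ θ| := by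
      rw [abs_mul]
      exact mul_le_of_le_one_right (abs_nonneg _) (Real.abs_sin_le_one θ)
    have hlarge : 2 * C * N < R u₀ θ := by
      by_contra! hcon
      have h1 := hle (R u₀ θ) (2 * C * N) (abs_le_abs_of_nonneg hr.le hcon)
      linarith [hle _ _ hcos, hle _ _ hsin]
    have hb : ∀ x, |x| ≤ |R u₀ θ| → -(x * f x) ≤ R u₀ θ * C := by
      intro x hx
      rw [abs_of_pos hr] at hx
      refine (neg_le_abs _).trans ?_
      rw [abs_mul]
      exact mul_le_mul hx (hbd x) (abs_nonneg _) hr.le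
    rw [slowness, le_div_iff₀ hp]
    have h1 := hb _ hcos
    have h2 := hb _ hsin
    have hN0 : 0 ≤ N := le_max_right _ _
    calc N * _ ≤ N * (2 * (R u₀ θ * C)) := by gcongr; linarith
      _ ≤ R u₀ θ ^ 2 := by nlinarith
  have hmono := intervalIntegral.integral_mono_on (a := 0) (b := Real.pi / 2) (by positivity)
    (by simp : IntervalIntegrable (fun _ => N) MeasureTheory.volume _ _)
    ((hI u₀ hu₀).intervalIntegrable _ _) (fun θ _ => hpt θ)
  simp only [intervalIntegral.integral_const, sub_zero, smul_eq_mul] at hmono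
  have hpi := Real.pi_gt_three
  have hN0 : 0 ≤ N := le_max_right _ _
  have hM : M ≤ N := le_max_left _ _
  nlinarith

lemma exists_bound {f : ℝ → ℝ} (hf : Continuous f) (hodd : ∀ x : ℝ, f (-x) = -f x)
    {ρ : ℝ} (hρ : 0 < ρ) (hconst : ∀ x : ℝ, ρ ≤ x → f x = f ρ) :
    ∃ C, ∀ x, |f x| ≤ C := by
  obtain ⟨C, hC⟩ := (isCompact_Icc (a := 0) (b := ρ)).exists_bound_of_continuousOn hf.continuousOn
  have hpos : ∀ x, 0 ≤ x → |f x| ≤ C := by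
    intro x hx
    rcases le_total x ρ with h | h
    · exact hC x ⟨hx, h⟩
    · rw [hconst x h]
      exact hC ρ ⟨hρ.le, le_rfl⟩
  refine ⟨C, fun x => ?_⟩
  rcases le_total 0 x with h | h
  · exact hpos x h
  · have := hpos (-x) (by linarith)
    rw [hodd, abs_neg] at this
    exact this

lemma potential_tendsto {f F : ℝ → ℝ} (hfb : ∀ x : ℝ, x ≠ 0 → x * f x < 0)
    (hFd : ∀ x, HasDerivAt F (-f x) x) {ρ : ℝ} (hρ : 0 < ρ)
    (hconst : ∀ x : ℝ, ρ ≤ x → f x = f ρ) : Tendsto F atTop atTop := by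
  have hfρ : 0 < -f ρ := by
    have := hfb ρ hρ.ne'
    nlinarith
  have hlow : ∀ x, ρ ≤ x → F ρ + -f ρ * (x - ρ) = F x := by
    intro x hx
    have h := constant_of_has_deriv_right_zero (f := fun t => F t - -f ρ * t) (a := ρ) (b := x)
      (fun t _ => ((hFd t).sub ((hasDerivAt_id t).const_mul (-f ρ))).continuousAt.continuousWithinAt)
      (fun t ht => by
        have h := (hFd t).sub ((hasDerivAt_id t).const_mul (-f ρ))
        rw [hconst t ht.1] at h
        rw [mul_one, sub_self] at h
        exact h.hasDerivWithinAt)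
      x (right_mem_Icc.2 hx)
    linarith
  have hl : Tendsto (fun x => F ρ + -f ρ * (x - ρ)) atTop atTop :=
    tendsto_atTop_add_const_left _ _
      ((tendsto_atTop_add_const_right _ (-ρ) tendsto_id).const_mul_atTop hfρ)
  refine hl.congr' ?_
  filter_upwards [eventually_ge_atTop ρ] with x hx using hlow x hx

theorem statement_15 (f : ℝ → ℝ) (hf : ContDiff ℝ 1 f)
    (hodd : ∀ x : ℝ, f (-x) = -f x) (hfb : ∀ x : ℝ, x ≠ 0 → x * f x < 0)
    (hderiv : deriv f 0 < 0)
    (hconst : ∃ ρ : ℝ, 0 < ρ ∧ ∀ x : ℝ, ρ ≤ x → f x = f ρ) :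
    ∃ τ : ℝ → ℝ, ContinuousOn τ (Ioi 0) ∧ (∀ u₀ : ℝ, 0 < u₀ → 0 < τ u₀) ∧
      (∀ u₀ : ℝ, 0 < u₀ → ∀ u v : ℝ → ℝ, u 0 = u₀ → v 0 = 0 →
        (∀ t : ℝ, 0 ≤ t → HasDerivAt u (f (v t)) t) →
        (∀ t : ℝ, 0 ≤ t → HasDerivAt v (-f (u t)) t) →
        (∀ t ∈ Ico 0 (τ u₀), 0 < u t) ∧ u (τ u₀) = 0) ∧
      Tendsto τ (nhdsWithin 0 (Ioi 0)) (nhds (-Real.pi / (2 * deriv f 0))) ∧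
      Tendsto τ atTop atTop := by
  obtain ⟨ρ, hρ, hconst⟩ := hconst
  have hfc : Continuous f := hf.continuous
  have hf0 : f 0 = 0 := by
    have := hodd 0
    rw [neg_zero] at this
    linarith
  obtain ⟨F, h0, hFd, hF⟩ := exists_potential f hfc hodd hfb
  have hc : Continuous F := continuous_iff_continuousAt.2 fun x => (hFd x).continuousAt
  obtain ⟨R, hR⟩ := exists_radius_s15 hc h0 hF
  obtain ⟨C, hbd⟩ := exists_bound hfc hodd hρ hconst
  have hcs := continuous_slowness hfc hfb hc hF hR
  have hI : ∀ u₀, 0 < u₀ → Continuous (slowness f R u₀) := fun u₀ hu₀ =>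
    hcs.comp
      (Continuous.prodMk (continuous_const (y := (⟨u₀, hu₀⟩ : Ioi (0 : ℝ)))) continuous_id)
  have hpi := Real.pi_pos
  refine ⟨fun u₀ => ∫ θ in (0 : ℝ)..(Real.pi / 2), slowness f R u₀ θ, ?_, ?_, ?_,
    tendsto_time_zero (hf.differentiable one_ne_zero 0) hf0 hderiv h0 hc hF hR hI,
    tendsto_time_atTop hfb hbd (potential_tendsto hfb hFd hρ hconst) hc hF hR hI⟩
  · rw [continuousOn_iff_continuous_domRestrict]
    exact intervalIntegral.continuous_parametric_intervalIntegral_of_continuous' hcs 0 (Real.pi / 2)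
  · intro u₀ hu₀
    exact intervalIntegral.intervalIntegral_pos_of_pos ((hI u₀ hu₀).intervalIntegrable _ _)
      (slowness_pos hfb hR hu₀) (by positivity)
  · intro u₀ hu₀ u v hu0 hv0 hu hv
    have hτpos : 0 < ∫ θ in (0 : ℝ)..(Real.pi / 2), slowness f R u₀ θ :=
      intervalIntegral.intervalIntegral_pos_of_pos ((hI u₀ hu₀).intervalIntegrable _ _)
        (slowness_pos hfb hR hu₀) (by positivity)
    set τ := ∫ θ in (0 : ℝ)..(Real.pi / 2), slowness f R u₀ θ with hτ
    have hucont : ContinuousOn u (Ici 0) := fun t ht => (hu t ht).continuousAt.continuousWithinAt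
    have hnonneg : ∀ t₁, 0 < t₁ → (∀ t ∈ Ico 0 t₁, 0 < u t) → 0 ≤ u t₁ := by
      intro t₁ ht₁ h
      have hlim : Tendsto u (nhdsWithin t₁ (Iio t₁)) (nhds (u t₁)) :=
        (hu t₁ ht₁.le).continuousAt.tendsto.mono_left nhdsWithin_le_nhds
      refine ge_of_tendsto hlim ?_
      filter_upwards [Ioo_mem_nhdsLT ht₁] with t ht using (h t ⟨ht.1.le, ht.2⟩).le
    have hfirst : ∀ t ∈ Ico 0 τ, 0 < u t := by
      by_contra! hcon
      obtain ⟨s, hs, hus⟩ := hcon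
      -- The first time `t₁ ≤ s` at which `u ≤ 0`.
      have hcomp : IsCompact (Icc 0 s ∩ u ⁻¹' Iic 0) :=
        isCompact_Icc.of_isClosed_subset
          ((hucont.mono Icc_subset_Ici_self).preimage_isClosed_of_isClosed isClosed_Icc isClosed_Iic)
          inter_subset_left
      obtain ⟨t₁, ⟨ht₁, hut₁⟩, hmin⟩ := hcomp.exists_isLeast ⟨s, ⟨hs.1, le_rfl⟩, hus⟩
      have hut₁ : u t₁ ≤ 0 := hut₁
      have ht₁pos : 0 < t₁ := by
        refine lt_of_le_of_ne ht₁.1 ?_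
        rintro rfl
        linarith
      have hbefore : ∀ t ∈ Ico 0 t₁, 0 < u t := by
        intro t ht
        by_contra! h
        exact absurd (hmin ⟨⟨ht.1, ht.2.le.trans ht₁.2⟩, h⟩) (not_le.2 ht.2)
      have hzero : u t₁ = 0 := le_antisymm hut₁ (hnonneg t₁ ht₁pos hbefore)
      obtain ⟨hv1, htime⟩ :=
        time_eq_integral hfc hfb hFd h0 hF hR hu₀ hu0 hv0 hu hv ht₁pos hbefore
      have harg : Complex.arg ⟨u t₁, v t₁⟩ = Real.pi / 2 :=
        Complex.arg_eq_pi_div_two_iff.2 ⟨hzero, hv1⟩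
      rw [harg] at htime
      have := hs.2
      have := ht₁.2
      linarith
    refine ⟨hfirst, ?_⟩
    by_contra hne
    have hpos : 0 < u τ := lt_of_le_of_ne (hnonneg τ hτpos hfirst) (Ne.symm hne)
    obtain ⟨hv1, htime⟩ :=
      time_eq_integral hfc hfb hFd h0 hF hR hu₀ hu0 hv0 hu hv hτpos hfirst
    have harg : Complex.arg ⟨u τ, v τ⟩ < Real.pi / 2 :=
      (abs_lt.1 (Complex.abs_arg_lt_pi_div_two_iff.2 (Or.inl hpos))).2
    -- The angle at time `τ` is below `π / 2`, so a positive amount of the integral is missing.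
    have hrest := intervalIntegral.intervalIntegral_pos_of_pos
      ((hI u₀ hu₀).intervalIntegrable _ _) (slowness_pos hfb hR hu₀) harg
    have hsum := intervalIntegral.integral_add_adjacent_intervals
      ((hI u₀ hu₀).intervalIntegrable (μ := MeasureTheory.volume) 0 (Complex.arg ⟨u τ, v τ⟩))
      ((hI u₀ hu₀).intervalIntegrable (Complex.arg ⟨u τ, v τ⟩) (Real.pi / 2))
    linarith
end

section
/- Given reals a, c, δ, γ > 0 satisfying (i) c < min(a, δ), (ii) γ ≥ 4a and γ > δ, (iii) δ + (c/δ)·γ ≤ a, suppose f is continuously differentiable, satisfies (H) and (H''), is constant on [ρ, ∞) for some ρ > 0, and satisfies (1/γ)·∫₀^a |f(s)| ds < a - c. Then the solution (u, v) : [0,∞) → ℝ² of the planar system u' = f(v), v' = -f(u) with u(0) = 2a - c, v(0) = 0 has its first positive zero of u before time 1: there exists t₀ ∈ (0,1) with u(t₀) = 0 and u(t) > 0 for all t ∈ [0, t₀). -/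
/-!
Put `G x = -∫₀ˣ f`. The energy `G (u t) + G (v t)` is conserved, hence equal to `G (2a - c)`.
As `G` is strictly increasing on `[0, ∞)`, both `u` and `v` stay at most `2a - c` as long as they
are nonnegative. The integral hypothesis says `2 G a < G (2a - c)`, so `u` and `v` cannot both be
below `a`; hence at each time one of them lies on the plateau `[a, 2a - c]`, where `f = -γ`, and
the other derivative has the favourable sign. So `(v - u)' ≥ γ` while `u > 0`. Since `v - u` starts
at `-(2a - c)` and stays at most `2a - c`, this can last at most for time
`(4a - 2c) / γ < 1`.
-/

open Set Filter

/-- The potential `G x = -∫₀ˣ f`, whose sum over the two coordinates is conserved by the planar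
system. -/
noncomputable def potential (f : ℝ → ℝ) (x : ℝ) : ℝ := -∫ s in (0 : ℝ)..x, f s

lemma potential_hasDerivAt {f : ℝ → ℝ} (hf : Continuous f) (x : ℝ) :
    HasDerivAt (potential f) (-f x) x :=
  (intervalIntegral.integral_hasDerivAt_right (hf.intervalIntegrable _ _)
    (hf.stronglyMeasurableAtFilter _ _) hf.continuousAt).neg

lemma potential_strictMonoOn {f : ℝ → ℝ} (hf : Continuous f) (hneg : ∀ x, 0 < x → f x < 0) :
    StrictMonoOn (potential f) (Ici 0) := by
  apply strictMonoOn_of_deriv_pos (convex_Ici 0)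
  · exact fun x _ => (potential_hasDerivAt hf x).continuousAt.continuousWithinAt
  · intro x hx
    rw [interior_Ici] at hx
    rw [(potential_hasDerivAt hf x).deriv]
    linarith [hneg x hx]

lemma potential_energy {f u v : ℝ → ℝ} (hf : Continuous f)
    (hu : ∀ t : ℝ, 0 ≤ t → HasDerivAt u (f (v t)) t)
    (hv : ∀ t : ℝ, 0 ≤ t → HasDerivAt v (-f (u t)) t) {t : ℝ} (ht : 0 ≤ t) :
    potential f (u t) + potential f (v t) = potential f (u 0) + potential f (v 0) := by
  have hd : ∀ s : ℝ, 0 ≤ s →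
      HasDerivAt (fun s => potential f (u s) + potential f (v s)) 0 s := by
    intro s hs
    have h := ((potential_hasDerivAt hf (u s)).comp s (hu s hs)).add
      ((potential_hasDerivAt hf (v s)).comp s (hv s hs))
    exact h.congr_deriv (by ring)
  exact constant_of_has_deriv_right_zero (a := 0) (b := t)
    (fun s hs => (hd s hs.1).continuousAt.continuousWithinAt)
    (fun s hs => (hd s hs.1).hasDerivWithinAt) t ⟨ht, le_rfl⟩

/-- A function that is positive at `0` and nonpositive somewhere on `[0, 1)` has a first positive
zero there. -/
lemma exists_first_zero {u : ℝ → ℝ} (hc : ContinuousOn u (Ici 0)) (h0 : 0 < u 0) {t₁ : ℝ}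
    (ht₁ : 0 ≤ t₁) (ht₁' : t₁ < 1) (h1 : u t₁ ≤ 0) :
    ∃ t₀ ∈ Ioo (0 : ℝ) 1, u t₀ = 0 ∧ ∀ t ∈ Ico 0 t₀, 0 < u t := by
  have ivt : ∀ t, 0 ≤ t → u t ≤ 0 → ∃ z ∈ Icc 0 t, u z = 0 := fun t ht hut =>
    intermediate_value_Icc' ht (hc.mono fun s hs => hs.1) ⟨hut, h0.le⟩
  obtain ⟨z, hz, hz0⟩ := ivt t₁ ht₁ h1
  have hclosed : IsClosed (Icc 0 t₁ ∩ u ⁻¹' {0}) :=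
    (hc.mono fun s hs => hs.1).preimage_isClosed_of_isClosed isClosed_Icc isClosed_singleton
  have hcomp : IsCompact (Icc 0 t₁ ∩ u ⁻¹' {0}) :=
    isCompact_Icc.of_isClosed_subset hclosed inter_subset_left
  obtain ⟨t₀, ⟨ht₀, hut₀⟩, hmin⟩ := hcomp.exists_isLeast ⟨z, hz, hz0⟩
  have hut₀ : u t₀ = 0 := hut₀
  have hne : t₀ ≠ 0 := by
    rintro rfl
    exact h0.ne' hut₀
  refine ⟨t₀, ⟨lt_of_le_of_ne ht₀.1 hne.symm, ht₀.2.trans_lt ht₁'⟩, hut₀, fun t ht => ?_⟩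
  by_contra hle
  obtain ⟨y, hy, hy0⟩ := ivt t ht.1 (not_lt.1 hle)
  have : t₀ ≤ y := hmin ⟨⟨hy.1, by linarith [hy.2, ht.2, ht₀.2]⟩, hy0⟩
  linarith [hy.2, ht.2]

theorem statement_16 (f : ℝ → ℝ) (a c δ γ : ℝ)
    (ha : 0 < a) (hc : 0 < c) (hδ : 0 < δ) (hγ : 0 < γ)
    (hi : c < min a δ) (hii : 4 * a ≤ γ ∧ δ < γ) (hiii : δ + (c / δ) * γ ≤ a)
    (hf : ContDiff ℝ 1 f) (hH : HypH f) (hH'' : HypH'' f a c δ γ)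
    (hconst : ∃ ρ : ℝ, 0 < ρ ∧ ∀ x : ℝ, ρ ≤ x → f x = f ρ)
    (hintegral : (1 / γ) * ∫ s in (0 : ℝ)..a, |f s| < a - c) :
    ∀ u v : ℝ → ℝ, u 0 = 2 * a - c → v 0 = 0 →
      (∀ t : ℝ, 0 ≤ t → HasDerivAt u (f (v t)) t) →
      (∀ t : ℝ, 0 ≤ t → HasDerivAt v (-f (u t)) t) →
      ∃ t₀ ∈ Ioo (0 : ℝ) 1, u t₀ = 0 ∧ ∀ t ∈ Ico 0 t₀, 0 < u t := by
  intro u v hu0 hv0 hu hv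
  obtain ⟨hcont, hfb, -, -⟩ := hH
  obtain ⟨-, -, hplat, -⟩ := hH''
  have hca : c < a := lt_of_lt_of_le hi (min_le_left _ _)
  have hneg : ∀ x, 0 < x → f x < 0 := fun x hx => by
    nlinarith [hfb x hx.ne']
  have hf0 : f 0 ≤ 0 :=
    le_of_tendsto (hcont.continuousAt.tendsto.mono_left (nhdsWithin_le_nhds (s := Ioi 0)))
      (eventually_nhdsWithin_of_forall fun x hx => (hneg x hx).le)
  have hnonpos : ∀ x, 0 ≤ x → f x ≤ 0 := fun x hx => by
    rcases hx.eq_or_lt with rfl | h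
    · exact hf0
    · exact (hneg x h).le
  have hmono := potential_strictMonoOn hcont hneg
  have hG0 : potential f 0 = 0 := by simp [potential]
  have hGa : potential f a = ∫ s in (0 : ℝ)..a, |f s| := by
    rw [potential, ← intervalIntegral.integral_neg]
    refine intervalIntegral.integral_congr fun x hx => ?_
    rw [uIcc_of_le ha.le] at hx
    exact (abs_of_nonpos (hnonpos x hx.1)).symm
  have hGstep : potential f (2 * a - c) = potential f a + γ * (a - c) := by
    have h : ∫ s in a..(2 * a - c), f s = ∫ _s in a..(2 * a - c), -γ :=
      intervalIntegral.integral_congr fun x hx => by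
        rw [uIcc_of_le (by linarith)] at hx
        exact hplat x hx
    rw [potential, potential, ← intervalIntegral.integral_add_adjacent_intervals
      (hcont.intervalIntegrable 0 a) (hcont.intervalIntegrable a (2 * a - c)), h,
      intervalIntegral.integral_const, smul_eq_mul]
    ring
  have hkey : 2 * potential f a < potential f (2 * a - c) := by
    rw [← hGa, one_div, inv_mul_lt_iff₀ hγ] at hintegral
    linarith
  have hE : ∀ t, 0 ≤ t → potential f (u t) + potential f (v t) = potential f (2 * a - c) := by
    intro t ht
    rw [potential_energy hcont hu hv ht, hu0, hv0, hG0, add_zero]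
  have hpos : ∀ x, 0 ≤ x → 0 ≤ potential f x := fun x hx => by
    rw [← hG0]
    exact hmono.monotoneOn self_mem_Ici hx hx
  have hbound : ∀ x, 0 ≤ x → potential f x ≤ potential f (2 * a - c) → x ≤ 2 * a - c :=
    fun x hx h => (hmono.le_iff_le hx (mem_Ici.2 (by linarith))).1 h
  by_cases hex : ∃ t₁, 0 ≤ t₁ ∧ t₁ < 1 ∧ u t₁ ≤ 0
  · obtain ⟨t₁, h0, h1, h⟩ := hex
    exact exists_first_zero (fun t ht => (hu t ht).continuousAt.continuousWithinAt)
      (by linarith) h0 h1 h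
  exfalso
  push Not at hex
  -- A time `s < 1` with `γ s ≥ 4a - c`, which exceeds the admissible growth `4a - 2c` of `v - u`.
  obtain ⟨s, hs0, hs1, hs⟩ : ∃ s : ℝ, 0 ≤ s ∧ s < 1 ∧ 4 * a - c ≤ γ * s := by
    refine ⟨(4 * a - c) / (4 * a), by apply div_nonneg <;> linarith,
      (div_lt_one (by linarith)).2 (by linarith), ?_⟩
    rw [mul_div_assoc', le_div_iff₀ (by linarith)]
    nlinarith [hii.1]
  have hupos : ∀ t ∈ Icc 0 s, 0 < u t := fun t ht => hex t ht.1 (ht.2.trans_lt hs1)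
  have hvmono : MonotoneOn v (Icc 0 s) := by
    apply monotoneOn_of_deriv_nonneg (convex_Icc 0 s)
    · exact fun t ht => (hv t ht.1).continuousAt.continuousWithinAt
    · intro t ht
      exact (hv t (interior_subset ht).1).differentiableAt.differentiableWithinAt
    · intro t ht
      have ht := interior_subset ht
      rw [(hv t ht.1).deriv]
      linarith [hneg _ (hupos t ht)]
  have hvnn : ∀ t ∈ Icc 0 s, 0 ≤ v t := fun t ht => by
    rw [← hv0]
    exact hvmono ⟨le_rfl, hs0⟩ ht ht.1
  have hule : ∀ t ∈ Icc 0 s, u t ≤ 2 * a - c := fun t ht =>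
    hbound _ (hupos t ht).le (by linarith [hE t ht.1, hpos _ (hvnn t ht)])
  have hvle : ∀ t ∈ Icc 0 s, v t ≤ 2 * a - c := fun t ht =>
    hbound _ (hvnn t ht) (by linarith [hE t ht.1, hpos _ (hupos t ht).le])
  have hspeed : ∀ t ∈ Icc 0 s, γ ≤ -f (u t) - f (v t) := by
    intro t ht
    rcases le_or_gt a (u t) with hau | hau
    · linarith [hplat _ ⟨hau, hule t ht⟩, hnonpos _ (hvnn t ht)]
    rcases le_or_gt a (v t) with hav | hav
    · linarith [hplat _ ⟨hav, hvle t ht⟩, hneg _ (hupos t ht)]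
    · linarith [hE t ht.1, hmono (hupos t ht).le ha.le hau, hmono (hvnn t ht) ha.le hav]
  have hd : ∀ t ∈ Icc 0 s,
      HasDerivAt (fun t => v t - u t - γ * t) (-f (u t) - f (v t) - γ * 1) t := fun t ht =>
    ((hv t ht.1).sub (hu t ht.1)).sub ((hasDerivAt_id t).const_mul γ)
  have hwmono : MonotoneOn (fun t => v t - u t - γ * t) (Icc 0 s) := by
    apply monotoneOn_of_deriv_nonneg (convex_Icc 0 s)
    · exact fun t ht => (hd t ht).continuousAt.continuousWithinAt
    · intro t ht
      exact (hd t (interior_subset ht)).differentiableAt.differentiableWithinAt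
    · intro t ht
      have ht := interior_subset ht
      rw [(hd t ht).deriv]
      linarith [hspeed t ht]
  have hfin := hwmono ⟨le_rfl, hs0⟩ ⟨hs0, le_rfl⟩ hs0
  simp only [hu0, hv0, mul_zero] at hfin
  linarith [hvle s ⟨hs0, le_rfl⟩, hupos s ⟨hs0, le_rfl⟩]
end
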